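/- arXiv:2111.11402 — 7 statements merged into one kernel-verified Lean document; each statement's English description precedes it below -/
import Mathlib

section
/- Let n be divisible by 3 with n ≥ 12, let m = n/3, and let Q be any m-queens configuration. Then Q' = {(i+m, j+m) : (i,j) ∈ Q} (the configuration Q placed in the central m×m box of the n×n board) is a partial n-queens configuration of size n/3 that cannot be completed to an n-queens configuration. In particular qc(n) ≤ n/3 + O(1). -/
/-!
Suppose `Q''` completes the centrally placed copy `P` of an `m`-queens configuration. The queens
of `P` already occupy all middle rows and all middle columns
(`IsQueens.exists_row`, `IsQueens.exists_col`), so every other queen of `Q''` lies in one of the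
four corner boxes of side `m`. The central box and two opposite corner boxes together meet
only `2m - 1` diagonals of one direction, hence hold at most `2m - 1` queens. Every queen is counted
for at least one of the two directions and the `m` queens of `P` are counted for both, so
`3m + m ≤ 2(2m - 1)`, which is absurd.
-/

/-- `Q` is a partial `n`-queens configuration. -/
def IsPartialQueens (n : ℕ) (Q : Finset (ℤ × ℤ)) : Prop :=
  (∀ q ∈ Q, q.1 ∈ Finset.Icc (1 : ℤ) n ∧ q.2 ∈ Finset.Icc (1 : ℤ) n) ∧
  ∀ q ∈ Q, ∀ q' ∈ Q, q ≠ q' →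
    q.1 ≠ q'.1 ∧ q.2 ≠ q'.2 ∧ q.1 + q.2 ≠ q'.1 + q'.2 ∧ q.1 - q.2 ≠ q'.1 - q'.2

/-- An `n`-queens configuration is a partial configuration of size `n`. -/
def IsQueens (n : ℕ) (Q : Finset (ℤ × ℤ)) : Prop :=
  IsPartialQueens n Q ∧ Q.card = n

/-- The `m` queens have distinct rows among `1, …, m`, so by counting they use all of them. -/
theorem IsQueens.exists_row {m : ℕ} {Q : Finset (ℤ × ℤ)} (hQ : IsQueens m Q) {i : ℤ}
    (h1 : 1 ≤ i) (h2 : i ≤ m) : ∃ q ∈ Q, q.1 = i := by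
  have hi : i ∈ Q.image Prod.fst := by
    rw [Finset.eq_of_subset_of_card_le (s := Q.image Prod.fst) (t := Finset.Icc (1 : ℤ) m)]
    · exact Finset.mem_Icc.2 ⟨h1, h2⟩
    · exact Finset.image_subset_iff.2 fun q hq => (hQ.1.1 q hq).1
    · rw [Finset.card_image_of_injOn, hQ.2]
      · simp
      · intro q hq q' hq' h
        by_contra hne
        exact (hQ.1.2 q hq q' hq' hne).1 h
  simpa only [Finset.mem_image] using hi

/-- The `m` queens have distinct columns among `1, …, m`, so by counting they use all of them. -/
theorem IsQueens.exists_col {m : ℕ} {Q : Finset (ℤ × ℤ)} (hQ : IsQueens m Q) {j : ℤ}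
    (h1 : 1 ≤ j) (h2 : j ≤ m) : ∃ q ∈ Q, q.2 = j := by
  have hj : j ∈ Q.image Prod.snd := by
    rw [Finset.eq_of_subset_of_card_le (s := Q.image Prod.snd) (t := Finset.Icc (1 : ℤ) m)]
    · exact Finset.mem_Icc.2 ⟨h1, h2⟩
    · exact Finset.image_subset_iff.2 fun q hq => (hQ.1.1 q hq).2
    · rw [Finset.card_image_of_injOn, hQ.2]
      · simp
      · intro q hq q' hq' h
        by_contra hne
        exact (hQ.1.2 q hq q' hq' hne).2.1 h
  simpa only [Finset.mem_image] using hj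

/-- Placing an `m = n/3`-queens configuration in the central `m × m` box of
the `n × n` board yields a partial `n`-queens configuration of size `n/3`
which cannot be completed. -/
theorem central_box_not_completable (n m : ℕ) (hm : n = 3 * m) (hn : 12 ≤ n)
    (Q : Finset (ℤ × ℤ)) (hQ : IsQueens m Q) :
    IsPartialQueens n (Q.image (fun q => (q.1 + (m:ℤ), q.2 + (m:ℤ)))) ∧
    (Q.image (fun q => (q.1 + (m:ℤ), q.2 + (m:ℤ)))).card = n / 3 ∧
    ¬ ∃ Q'' : Finset (ℤ × ℤ), IsQueens n Q'' ∧
        Q.image (fun q => (q.1 + (m:ℤ), q.2 + (m:ℤ))) ⊆ Q'' := by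
  have hinj : Function.Injective (fun q : ℤ × ℤ => (q.1 + (m:ℤ), q.2 + (m:ℤ))) := by
    rintro ⟨a, b⟩ ⟨c, d⟩ h
    simpa using h
  have hcard := Finset.card_image_of_injective Q hinj
  rw [hQ.2] at hcard
  set P := Q.image (fun q => (q.1 + (m:ℤ), q.2 + (m:ℤ))) with hP
  have hbox : ∀ p ∈ P, (m:ℤ) + 1 ≤ p.1 ∧ p.1 ≤ 2 * m ∧ (m:ℤ) + 1 ≤ p.2 ∧ p.2 ≤ 2 * m := by
    intro p hp
    obtain ⟨q, hq, rfl⟩ := Finset.mem_image.1 hp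
    have := hQ.1.1 q hq
    simp only [Finset.mem_Icc] at this
    refine ⟨?_, ?_, ?_, ?_⟩ <;> dsimp only <;> omega
  refine ⟨⟨?_, ?_⟩, by omega, ?_⟩
  · intro p hp
    have := hbox p hp
    simp only [Finset.mem_Icc]
    omega
  · intro p hp p' hp' hne
    obtain ⟨q, hq, rfl⟩ := Finset.mem_image.1 hp
    obtain ⟨q', hq', rfl⟩ := Finset.mem_image.1 hp'
    have := hQ.1.2 q hq q' hq' (fun h => hne (by rw [h]))
    dsimp only
    omega
  rintro ⟨Q'', ⟨⟨hrange, hlines⟩, hcard''⟩, hsub⟩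
  have hrow : ∀ q ∈ Q'', (m:ℤ) + 1 ≤ q.1 → q.1 ≤ 2 * m → q ∈ P := by
    intro q hq h1 h2
    obtain ⟨p, hp, hpq⟩ := hQ.exists_row (i := q.1 - m) (by omega) (by omega)
    have hp' : (p.1 + (m:ℤ), p.2 + (m:ℤ)) ∈ P := Finset.mem_image_of_mem _ hp
    by_contra hqP
    refine (hlines q hq _ (hsub hp') fun h => hqP (h ▸ hp')).1 ?_
    dsimp only
    omega
  have hcol : ∀ q ∈ Q'', (m:ℤ) + 1 ≤ q.2 → q.2 ≤ 2 * m → q ∈ P := by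
    intro q hq h1 h2
    obtain ⟨p, hp, hpq⟩ := hQ.exists_col (j := q.2 - m) (by omega) (by omega)
    have hp' : (p.1 + (m:ℤ), p.2 + (m:ℤ)) ∈ P := Finset.mem_image_of_mem _ hp
    by_contra hqP
    refine (hlines q hq _ (hsub hp') fun h => hqP (h ▸ hp')).2.1 ?_
    dsimp only
    omega
  -- `S` and `T` are the queens on the `2m - 1` central diagonals in the two directions; for `T`,
  -- `|i + j - (3m + 1)| ≤ m - 1` is the same as `2m + 2 ≤ i + j ≤ 4m`.
  let S := Q''.filter fun q => q.1 - q.2 ∈ Finset.Icc (1 - (m:ℤ)) (m - 1)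
  let T := Q''.filter fun q => q.1 + q.2 ∈ Finset.Icc (2 * (m:ℤ) + 2) (4 * m)
  have hS : S.card ≤ 2 * m - 1 := by
    have h := Finset.card_le_card_of_injOn (s := S)
      (t := Finset.Icc (1 - (m:ℤ)) (m - 1)) (fun q => q.1 - q.2)
      (fun q hq => (Finset.mem_filter.1 hq).2) (by
        intro q hq q' hq' h
        by_contra hne
        exact (hlines q (Finset.mem_filter.1 hq).1 q' (Finset.mem_filter.1 hq').1 hne).2.2.2 h)
    rw [Int.card_Icc] at h
    omega
  have hT : T.card ≤ 2 * m - 1 := by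
    have h := Finset.card_le_card_of_injOn (s := T)
      (t := Finset.Icc (2 * (m:ℤ) + 2) (4 * m)) (fun q => q.1 + q.2)
      (fun q hq => (Finset.mem_filter.1 hq).2) (by
        intro q hq q' hq' h
        by_contra hne
        exact (hlines q (Finset.mem_filter.1 hq).1 q' (Finset.mem_filter.1 hq').1 hne).2.2.1 h)
    rw [Int.card_Icc] at h
    omega
  have hunion : Q'' ⊆ S ∪ T := by
    intro q hq
    have h := hrange q hq
    have hr := hrow q hq
    have hc := hcol q hq
    have hb := hbox q
    simp only [S, T, Finset.mem_union, Finset.mem_filter, Finset.mem_Icc, hq, true_and] at h ⊢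
    by_cases hqP : q ∈ P
    · have := hb hqP
      omega
    · simp only [hqP, imp_false] at hr hc
      omega
  have hinter : P ⊆ S ∩ T := by
    intro q hq
    have hb := hbox q hq
    simp only [S, T, Finset.mem_inter, Finset.mem_filter, Finset.mem_Icc, hsub hq, true_and]
    omega
  have h1 := Finset.card_le_card hunion
  have h2 := Finset.card_le_card hinter
  have h3 := Finset.card_union_add_card_inter S T
  omega
end

section
/- There is an absolute constant C such that for all n∈ℕ there exists a weighting w: [n]×[n] → [1/2,1] with the property that every row and every column of the n×n chessboard has total weight within C of 5n/6, while every diagonal has total weight at most 2n/3 + C. -/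
/-!
Cut the board into a `3 × 3` array of blocks of side about `n/3`, and give the corner blocks weight
`3/4`, the central block weight `1/2` and the four edge blocks weight `1`. A row or column then has
weight about `(n/3)(3/4 + 1 + 3/4)` or `(n/3)(1 + 1/2 + 1)`, and both equal `5n/6`.
A diagonal at offset `k` has `n - |k|` squares. If `|k| ≥ n/3` this is already at most `2n/3`.
Otherwise the diagonal meets two corner blocks and the central block in about `n/3 - |k|` squares
each, so its weight is at most about
`n - |k| - (1/4 + 1/2 + 1/4)(n/3 - |k|) = 2n/3` (`sum_diag_nonneg`).
With outer strips of width exactly `⌊n/3⌋` on every side the weighting is invariant under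
transposition and under reflection of the columns, so all other diagonals reduce to the diagonals
`i - j = k` with `k ≥ 0`.
-/

/-- The block weighting on the board of side `n` with outer strips of width `a`: `1/2` if both
coordinates lie in the middle strip `(a, n - a]`, `3/4` if neither does, `1` otherwise. -/
noncomputable def blockWeight (n a : ℤ) (p : ℤ × ℤ) : ℝ :=
  if a < p.1 ∧ p.1 ≤ n - a then (if a < p.2 ∧ p.2 ≤ n - a then 1 / 2 else 1)
  else (if a < p.2 ∧ p.2 ≤ n - a then 1 else 3 / 4)

lemma blockWeight_bounds (n a : ℤ) (p : ℤ × ℤ) :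
    1 / 2 ≤ blockWeight n a p ∧ blockWeight n a p ≤ 1 := by
  unfold blockWeight
  split_ifs <;> norm_num

lemma blockWeight_swap (n a : ℤ) (p : ℤ × ℤ) :
    blockWeight n a p.swap = blockWeight n a p := by
  unfold blockWeight
  simp only [Prod.fst_swap, Prod.snd_swap]
  split_ifs <;> rfl

lemma blockWeight_reflect (n a i j : ℤ) :
    blockWeight n a (i, n + 1 - j) = blockWeight n a (i, j) := by
  have h : (a < n + 1 - j ∧ n + 1 - j ≤ n - a) ↔ (a < j ∧ j ≤ n - a) := by omega
  simp only [blockWeight, h]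

lemma sum_indicator_Icc {l r l' r' : ℤ} (hl : l ≤ l') (hr : r' ≤ r) (h : l' ≤ r' + 1) (c : ℝ) :
    (∑ j ∈ Finset.Icc l r, if l' ≤ j ∧ j ≤ r' then c else 0) = (r' + 1 - l') * c := by
  rw [← Finset.sum_filter]
  have : (Finset.Icc l r).filter (fun j => l' ≤ j ∧ j ≤ r') = Finset.Icc l' r' := by
    ext j
    simp only [Finset.mem_filter, Finset.mem_Icc]
    omega
  rw [this, Finset.sum_const, Int.card_Icc, nsmul_eq_mul]
  have h2 : (((r' + 1 - l').toNat : ℤ) : ℝ) = ((r' + 1 - l' : ℤ) : ℝ) := by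
    rw [Int.toNat_of_nonneg (by omega)]
  push_cast at h2
  rw [h2]

lemma sum_const_Icc {r : ℤ} (hr : 0 ≤ r) (c : ℝ) : (∑ _j ∈ Finset.Icc 1 r, c) = r * c := by
  rw [Finset.sum_const, Int.card_Icc, nsmul_eq_mul]
  have h2 : (((r + 1 - 1).toNat : ℤ) : ℝ) = ((r : ℤ) : ℝ) := by
    rw [Int.toNat_of_nonneg (by omega), add_sub_cancel_right]
  push_cast at h2
  rw [h2]

lemma sum_row (n a : ℤ) (ha : 0 ≤ a) (h2 : 2 * a ≤ n) (i : ℤ) :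
    (∑ j ∈ Finset.Icc 1 n, blockWeight n a (i, j)) =
      if a < i ∧ i ≤ n - a then (n : ℝ) - (n - 2 * a) / 2 else n - a / 2 := by
  have hs := fun c => sum_indicator_Icc (l := 1) (r := n) (l' := a + 1) (r' := n - a)
    (by omega) (by omega) (by omega) c
  split_ifs with hi
  · have : ∀ j ∈ Finset.Icc 1 n, blockWeight n a (i, j) =
        1 + if a + 1 ≤ j ∧ j ≤ n - a then (-1 / 2 : ℝ) else 0 := by
      intro j _
      simp only [blockWeight, hi, and_self, if_true, Int.add_one_le_iff]
      split_ifs <;> norm_num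
    rw [Finset.sum_congr rfl this, Finset.sum_add_distrib, hs, sum_const_Icc (by omega)]
    push_cast
    ring
  · have : ∀ j ∈ Finset.Icc 1 n, blockWeight n a (i, j) =
        3 / 4 + if a + 1 ≤ j ∧ j ≤ n - a then (1 / 4 : ℝ) else 0 := by
      intro j _
      simp only [blockWeight, hi, if_false, Int.add_one_le_iff]
      split_ifs <;> norm_num
    rw [Finset.sum_congr rfl this, Finset.sum_add_distrib, hs, sum_const_Icc (by omega)]
    push_cast
    ring

/-- The bound for diagonals on one side of the main one, parametrized by the column. When `k < a`
the saving against weight `1` comes from three intervals of `j`, on which `j` and `j + k` lie in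
the same strip. -/
lemma sum_diag_nonneg (n a k : ℤ) (h3 : 3 * a ≤ n) (hk : 0 ≤ k) (hkn : k < n) :
    (∑ j ∈ Finset.Icc 1 (n - k), blockWeight n a (j + k, j)) ≤ (n : ℝ) - a := by
  rcases le_or_gt a k with hak | hak
  · refine (Finset.sum_le_sum fun j _ => (blockWeight_bounds n a (j + k, j)).2).trans ?_
    rw [sum_const_Icc (by omega)]
    have : (a : ℝ) ≤ k := by exact_mod_cast hak
    push_cast
    linarith
  · have hle : ∀ j ∈ Finset.Icc 1 (n - k), blockWeight n a (j + k, j) ≤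
        1 + (if 1 ≤ j ∧ j ≤ a - k then (-1 / 4 : ℝ) else 0)
          + (if a + 1 ≤ j ∧ j ≤ n - a - k then (-1 / 2 : ℝ) else 0)
          + (if n - a + 1 ≤ j ∧ j ≤ n - k then (-1 / 4 : ℝ) else 0) := by
      intro j hj
      rw [Finset.mem_Icc] at hj
      simp only [blockWeight]
      split_ifs <;> first | (exfalso; omega) | norm_num
    refine (Finset.sum_le_sum hle).trans ?_
    rw [Finset.sum_add_distrib, Finset.sum_add_distrib, Finset.sum_add_distrib,
      sum_const_Icc (by omega), sum_indicator_Icc (by omega) (by omega) (by omega),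
      sum_indicator_Icc (by omega) (by omega) (by omega),
      sum_indicator_Icc (by omega) (by omega) (by omega)]
    have hR : 3 * (a : ℝ) ≤ n := by exact_mod_cast h3
    push_cast
    linarith

lemma sum_diag_filter_nonneg (n a k : ℤ) (h3 : 3 * a ≤ n) (hk : 0 ≤ k) (hkn : k < n) :
    (∑ p ∈ (Finset.Icc 1 n ×ˢ Finset.Icc 1 n).filter (fun p => p.1 - p.2 = k),
      blockWeight n a p) ≤ (n : ℝ) - a := by
  refine le_of_eq_of_le ?_ (sum_diag_nonneg n a k h3 hk hkn)
  refine Finset.sum_nbij' (fun p => p.2) (fun j => (j + k, j)) ?_ ?_ ?_ ?_ ?_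
  · rintro ⟨i, j⟩ h
    simp only [Finset.mem_filter, Finset.mem_product, Finset.mem_Icc] at h ⊢
    omega
  · intro j h
    simp only [Finset.mem_filter, Finset.mem_product, Finset.mem_Icc] at h ⊢
    omega
  · rintro ⟨i, j⟩ h
    simp only [Finset.mem_filter] at h
    ext <;> simp only
    omega
  · intro j _
    rfl
  · rintro ⟨i, j⟩ h
    simp only [Finset.mem_filter] at h
    obtain rfl : i = j + k := by omega
    rfl

lemma sum_diag_filter (n a k : ℤ) (h3 : 3 * a ≤ n) (hk : -n < k) (hkn : k < n) :
    (∑ p ∈ (Finset.Icc 1 n ×ˢ Finset.Icc 1 n).filter (fun p => p.1 - p.2 = k),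
      blockWeight n a p) ≤ (n : ℝ) - a := by
  rcases le_or_gt 0 k with h0 | h0
  · exact sum_diag_filter_nonneg n a k h3 h0 hkn
  · refine le_of_eq_of_le ?_
      (sum_diag_filter_nonneg n a (-k) h3 (by omega) (by omega))
    refine Finset.sum_nbij' Prod.swap Prod.swap ?_ ?_ (fun p _ => p.swap_swap)
      (fun p _ => p.swap_swap) (fun p _ => (blockWeight_swap n a p).symm)
    all_goals
      rintro ⟨i, j⟩ h
      simp only [Finset.mem_filter, Finset.mem_product, Finset.mem_Icc, Prod.swap_prod_mk] at h ⊢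
      omega

lemma sum_antidiag_filter (n a k : ℤ) (h3 : 3 * a ≤ n) (hk : -n < k) (hkn : k < n) :
    (∑ p ∈ (Finset.Icc 1 n ×ˢ Finset.Icc 1 n).filter (fun p => p.1 + p.2 - (n + 1) = k),
      blockWeight n a p) ≤ (n : ℝ) - a := by
  refine le_of_eq_of_le ?_ (sum_diag_filter n a k h3 hk hkn)
  refine Finset.sum_nbij' (fun p => (p.1, n + 1 - p.2)) (fun p => (p.1, n + 1 - p.2))
    ?_ ?_ ?_ ?_ (fun p _ => (blockWeight_reflect n a p.1 p.2).symm)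
  · rintro ⟨i, j⟩ h
    simp only [Finset.mem_filter, Finset.mem_product, Finset.mem_Icc] at h ⊢
    omega
  · rintro ⟨i, j⟩ h
    simp only [Finset.mem_filter, Finset.mem_product, Finset.mem_Icc] at h ⊢
    omega
  · rintro ⟨i, j⟩ _
    simp
  · rintro ⟨i, j⟩ _
    simp


/-- Proposition 2.4: there is an absolute constant `C` such that for every `n`
there is a weighting `w : [n] × [n] → [1/2, 1]` for which every row and column
has total weight within `C` of `5n/6`, while every diagonal has total weight
at most `2n/3 + C`. -/
theorem regularizing_weighting :
    ∃ C : ℝ, ∀ n : ℕ, ∃ w : ℤ × ℤ → ℝ,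
      (∀ p ∈ Finset.Icc (1 : ℤ) n ×ˢ Finset.Icc (1 : ℤ) n,
        1 / 2 ≤ w p ∧ w p ≤ 1) ∧
      (∀ i ∈ Finset.Icc (1 : ℤ) n,
        |(∑ j ∈ Finset.Icc (1 : ℤ) n, w (i, j)) - 5 * n / 6| ≤ C) ∧
      (∀ j ∈ Finset.Icc (1 : ℤ) n,
        |(∑ i ∈ Finset.Icc (1 : ℤ) n, w (i, j)) - 5 * n / 6| ≤ C) ∧
      (∀ k ∈ Finset.Icc (-(n : ℤ) + 1) ((n : ℤ) - 1),
        (∑ p ∈ (Finset.Icc (1 : ℤ) n ×ˢ Finset.Icc (1 : ℤ) n).filter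
            (fun p => p.1 + p.2 - ((n : ℤ) + 1) = k), w p) ≤ 2 * n / 3 + C ∧
        (∑ p ∈ (Finset.Icc (1 : ℤ) n ×ˢ Finset.Icc (1 : ℤ) n).filter
            (fun p => p.1 - p.2 = k), w p) ≤ 2 * n / 3 + C) := by
  refine ⟨1, fun n => ?_⟩
  obtain ⟨a, ha, h3, h3'⟩ : ∃ a : ℤ, 0 ≤ a ∧ 3 * a ≤ n ∧ (n : ℤ) ≤ 3 * a + 2 :=
    ⟨n / 3, by omega, by omega, by omega⟩
  have hR : 3 * (a : ℝ) ≤ n := by exact_mod_cast h3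
  have hR' : (n : ℝ) ≤ 3 * a + 2 := by exact_mod_cast h3'
  have hrow : ∀ i : ℤ,
      |(∑ j ∈ Finset.Icc (1 : ℤ) n, blockWeight n a (i, j)) - 5 * n / 6| ≤ 1 := by
    intro i
    rw [sum_row n a ha (by omega) i, abs_le]
    push_cast
    split_ifs <;> constructor <;> linarith
  refine ⟨blockWeight n a, fun p _ => blockWeight_bounds n a p, fun i _ => hrow i,
    fun j _ => ?_, fun k hk => ?_⟩
  · have : ∀ i ∈ Finset.Icc (1 : ℤ) n, blockWeight n a (i, j) = blockWeight n a (j, i) :=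
      fun i _ => blockWeight_swap n a (j, i)
    rw [Finset.sum_congr rfl this]
    exact hrow j
  · rw [Finset.mem_Icc] at hk
    have h1 := sum_diag_filter n a k h3 (by omega) (by omega)
    have h2 := sum_antidiag_filter n a k h3 (by omega) (by omega)
    push_cast at h1 h2
    constructor <;> linarith
end

section
/- Let c, d' > 0 and let G be a bipartite graph with parts A, B of size n in which any two vertices in the same part have at least c common neighbours. Let w₀: E(G) → [0,1] be an edge weighting such that for every vertex u, the total weight of the edges at u is within d' of d̄, where d̄ = (1/n)·Σ_{e∈E(G)} w₀(e). Then there exists an edge weighting w: E(G) → ℝ such that the total weight of the edges at every vertex is exactly d̄, and |w(e) − w₀(e)| ≤ 2d'/c for every edge e ∈ E(G). -/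
/-!
The weight is corrected on each side of the bipartition separately. On the side `A`, let `x a` be
the excess of `a`, so that `∑ x = 0` and `|x a| ≤ d'`. Excess is transported from the surplus
vertices to the deficit vertices with `f a a' = (x a * |x a'| - |x a| * x a') / ∑ |x|`. This
transport is antisymmetric, moves the total amount `x a` out of `a`, and every vertex only sends or
only receives, so `∑ a', |f a a'| = |x a|`. The amount `f a a'` is routed through paths of length two,
split equally between the common neighbours of `a` and `a'`: each such `b` contributes the same
amount at the edge `a b` as it cancels at the edge `a' b`. Hence the weights on the side `B` do not
change, and an edge at `a` changes by at most `∑ a', |f a a'| / c ≤ d' / c`. Applying this to both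
sides changes each edge by at most `2 d' / c`.
-/

/-- For real numbers, `x |y| - |x| y` vanishes when the signs agree and is `± 2 |x y|` otherwise. -/
lemma abs_transport (x y : ℝ) : |x * |y| - |x| * y| = |x| * |y| - x * y := by
  rcases abs_cases x with ⟨h, hx⟩ | ⟨h, hx⟩ <;> rcases abs_cases y with ⟨k, hy⟩ | ⟨k, hy⟩ <;>
    rw [h, k]
  · simp
  · rw [abs_of_nonneg (by nlinarith)]
  · rw [abs_of_nonpos (by nlinarith)]; ring
  · rw [abs_of_nonneg (by nlinarith)]; ring

open Classical in
/-- The correction for one side of the bipartition: an edge function whose vertex sums on the side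
`A` are the prescribed `x`, and whose vertex sums on the side `B` vanish. -/
lemma exists_one_sided_shift {V W : Type} (A : Finset V) (B : Finset W) (R : V → W → Prop)
    (c d : ℝ) (hc : 0 < c)
    (hcommon : ∀ a ∈ A, ∀ a' ∈ A, a ≠ a' →
      c ≤ ((B.filter (fun b => R a b ∧ R a' b)).card : ℝ))
    (x : V → ℝ) (hx : ∑ a ∈ A, x a = 0) (hd : ∀ a ∈ A, |x a| ≤ d) :
    ∃ δ : V → W → ℝ,
      (∀ a ∈ A, ∑ b ∈ B.filter (fun b => R a b), δ a b = x a) ∧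
      (∀ b ∈ B, ∑ a ∈ A.filter (fun a => R a b), δ a b = 0) ∧
      (∀ a ∈ A, ∀ b, |δ a b| ≤ d / c) := by
  set T : ℝ := ∑ a ∈ A, |x a| with hT
  set f : V → V → ℝ := fun a a' => (x a * |x a'| - |x a| * x a') / T with hf
  set k : V → V → ℝ := fun a a' => ((B.filter (fun b => R a b ∧ R a' b)).card : ℝ) with hk
  have hT0 : 0 ≤ T := Finset.sum_nonneg fun a _ => abs_nonneg _
  -- If `T = 0` then `x` vanishes on `A`, so the junk value of the division by `T` is harmless.
  have hxT : ∀ a ∈ A, T = 0 → x a = 0 := fun a ha h => by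
    have := (Finset.sum_eq_zero_iff_of_nonneg (fun a _ => abs_nonneg (x a))).1 h a ha
    exact abs_eq_zero.1 this
  have hfself : ∀ a, f a a = 0 := fun a => by simp [hf, mul_comm]
  have hfanti : ∀ a a', f a a' = -f a' a := fun a a' => by simp only [hf]; ring
  have hksymm : ∀ a a', k a a' = k a' a := fun a a' => by simp only [hk, and_comm]
  have hfsum : ∀ a ∈ A, ∑ a' ∈ A, f a a' = x a := fun a ha => by
    simp only [hf]
    rw [← Finset.sum_div, Finset.sum_sub_distrib, ← Finset.mul_sum, ← Finset.mul_sum, hx, ← hT,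
      mul_zero, sub_zero]
    by_cases h : T = 0
    · simp [hxT a ha h]
    · field_simp
  have hfabs : ∀ a ∈ A, ∑ a' ∈ A, |f a a'| = |x a| := fun a ha => by
    simp only [hf, abs_div, abs_transport, abs_of_nonneg hT0]
    rw [← Finset.sum_div, Finset.sum_sub_distrib, ← Finset.mul_sum, ← Finset.mul_sum, hx, ← hT,
      mul_zero, sub_zero]
    by_cases h : T = 0
    · simp [hxT a ha h]
    · field_simp
  refine ⟨fun a b => ∑ a' ∈ A.filter (fun a' => R a' b), f a a' / k a a', ?_, ?_, ?_⟩
  · intro a ha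
    rw [← hfsum a ha]
    simp only [Finset.sum_filter (s := A)]
    rw [Finset.sum_comm]
    refine Finset.sum_congr rfl fun a' ha' => ?_
    rw [← Finset.sum_filter, Finset.filter_filter, Finset.sum_const, nsmul_eq_mul]
    by_cases h : a = a'
    · subst h; simp [hfself]
    · have : (0 : ℝ) < k a a' := hc.trans_le (hcommon a ha a' ha' h)
      change k a a' * (f a a' / k a a') = _
      field_simp
  · intro b _
    -- The double sum of an antisymmetric function equals its own negative.
    have h : ∀ s : Finset V, ∑ a ∈ s, ∑ a' ∈ s, f a a' / k a a' =
        -∑ a ∈ s, ∑ a' ∈ s, f a a' / k a a' := fun s => by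
      conv_lhs => rw [Finset.sum_comm]
      simp only [← Finset.sum_neg_distrib]
      refine Finset.sum_congr rfl fun a _ => Finset.sum_congr rfl fun a' _ => ?_
      rw [hfanti a' a, hksymm a' a, neg_div]
    have := h (A.filter (fun a => R a b))
    simp only
    linarith
  · intro a ha b
    calc |∑ a' ∈ A.filter (fun a' => R a' b), f a a' / k a a'|
        ≤ ∑ a' ∈ A.filter (fun a' => R a' b), |f a a' / k a a'| :=
          Finset.abs_sum_le_sum_abs _ _
      _ ≤ ∑ a' ∈ A, |f a a' / k a a'| :=
          Finset.sum_le_sum_of_subset_of_nonneg (Finset.filter_subset _ _)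
            fun _ _ _ => abs_nonneg _
      _ ≤ ∑ a' ∈ A, |f a a'| / c := by
          refine Finset.sum_le_sum fun a' ha' => ?_
          by_cases h : a = a'
          · subst h; simp [hfself]
          · have hck : c ≤ k a a' := hcommon a ha a' ha' h
            rw [abs_div, abs_of_pos (hc.trans_le hck)]
            exact div_le_div_of_nonneg_left (abs_nonneg _) hc hck
      _ = |x a| / c := by rw [← Finset.sum_div, hfabs a ha]
      _ ≤ d / c := div_le_div_of_nonneg_right (hd a ha) hc.le

/-- Proposition 2.5: given a bipartite graph with parts of size `n` where any
two vertices in the same part have at least `c` common neighbours, and an edge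
weighting `w₀` with values in `[0,1]` whose vertex weights are all within `d'`
of the average vertex weight `d̄`, there is an edge weighting `w` whose vertex
weights all equal `d̄` and which differs from `w₀` by at most `2d'/c` on every
edge. -/
theorem weight_shifting (c d' : ℝ) (hc : 0 < c) (hd' : 0 < d')
    (V W : Type) [DecidableEq V] [DecidableEq W]
    (n : ℕ) (A : Finset V) (B : Finset W)
    (hA : A.card = n) (hB : B.card = n)
    (E : Finset (V × W)) (hE : ∀ e ∈ E, e.1 ∈ A ∧ e.2 ∈ B)
    (hcommonA : ∀ a ∈ A, ∀ a' ∈ A, a ≠ a' →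
      c ≤ ((B.filter (fun b => (a, b) ∈ E ∧ (a', b) ∈ E)).card : ℝ))
    (hcommonB : ∀ b ∈ B, ∀ b' ∈ B, b ≠ b' →
      c ≤ ((A.filter (fun a => (a, b) ∈ E ∧ (a, b') ∈ E)).card : ℝ))
    (w₀ : V × W → ℝ) (hw₀ : ∀ e ∈ E, 0 ≤ w₀ e ∧ w₀ e ≤ 1)
    (dbar : ℝ) (hdbar : dbar = (∑ e ∈ E, w₀ e) / n)
    (hdegA : ∀ a ∈ A, |(∑ e ∈ E.filter (fun e => e.1 = a), w₀ e) - dbar| ≤ d')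
    (hdegB : ∀ b ∈ B, |(∑ e ∈ E.filter (fun e => e.2 = b), w₀ e) - dbar| ≤ d') :
    ∃ w : V × W → ℝ,
      (∀ a ∈ A, ∑ e ∈ E.filter (fun e => e.1 = a), w e = dbar) ∧
      (∀ b ∈ B, ∑ e ∈ E.filter (fun e => e.2 = b), w e = dbar) ∧
      (∀ e ∈ E, |w e - w₀ e| ≤ 2 * d' / c) := by
  classical
  have hrow : ∀ a ∈ A, ∀ f : V × W → ℝ, ∑ e ∈ E.filter (fun e => e.1 = a), f e =
      ∑ b ∈ B.filter (fun b => (a, b) ∈ E), f (a, b) := fun a _ f => by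
    refine Finset.sum_bij' (fun e _ => e.2) (fun b _ => (a, b)) ?_ ?_ ?_ ?_ ?_
    · rintro ⟨a', b⟩ he
      obtain ⟨hm, rfl⟩ := Finset.mem_filter.1 he
      exact Finset.mem_filter.2 ⟨(hE _ hm).2, hm⟩
    · intro b hb
      exact Finset.mem_filter.2 ⟨(Finset.mem_filter.1 hb).2, rfl⟩
    · rintro ⟨a', b⟩ he
      obtain ⟨hm, rfl⟩ := Finset.mem_filter.1 he
      rfl
    · intro b _; rfl
    · rintro ⟨a', b⟩ he
      obtain ⟨hm, rfl⟩ := Finset.mem_filter.1 he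
      rfl
  have hcol : ∀ b ∈ B, ∀ f : V × W → ℝ, ∑ e ∈ E.filter (fun e => e.2 = b), f e =
      ∑ a ∈ A.filter (fun a => (a, b) ∈ E), f (a, b) := fun b _ f => by
    refine Finset.sum_bij' (fun e _ => e.1) (fun a _ => (a, b)) ?_ ?_ ?_ ?_ ?_
    · rintro ⟨a, b'⟩ he
      obtain ⟨hm, rfl⟩ := Finset.mem_filter.1 he
      exact Finset.mem_filter.2 ⟨(hE _ hm).1, hm⟩
    · intro a ha
      exact Finset.mem_filter.2 ⟨(Finset.mem_filter.1 ha).2, rfl⟩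
    · rintro ⟨a, b'⟩ he
      obtain ⟨hm, rfl⟩ := Finset.mem_filter.1 he
      rfl
    · intro a _; rfl
    · rintro ⟨a, b'⟩ he
      obtain ⟨hm, rfl⟩ := Finset.mem_filter.1 he
      rfl
  have htot : (n : ℝ) * dbar = ∑ e ∈ E, w₀ e := by
    rcases Nat.eq_zero_or_pos n with h | h
    -- There is no vertex, hence no edge, when `n = 0`.
    · have hA0 : A = ∅ := Finset.card_eq_zero.1 (hA.trans h)
      have hE0 : E = ∅ := Finset.eq_empty_of_forall_notMem fun e he => by
        simpa [hA0] using (hE e he).1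
      simp [h, hE0]
    · have : (n : ℝ) ≠ 0 := by positivity
      rw [hdbar]; field_simp
  obtain ⟨δ, hδA, hδB, hδ⟩ := exists_one_sided_shift A B (fun a b => (a, b) ∈ E) c d' hc
    (fun a ha a' ha' h => by convert hcommonA a ha a' ha' h)
    (fun a => (∑ e ∈ E.filter (fun e => e.1 = a), w₀ e) - dbar)
    (by
      rw [Finset.sum_sub_distrib, Finset.sum_fiberwise_of_maps_to (fun e he => (hE e he).1),
        Finset.sum_const, hA, nsmul_eq_mul, htot, sub_self]) hdegA
  obtain ⟨ε, hεB, hεA, hε⟩ := exists_one_sided_shift B A (fun b a => (a, b) ∈ E) c d' hc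
    (fun b hb b' hb' h => by convert hcommonB b hb b' hb' h)
    (fun b => (∑ e ∈ E.filter (fun e => e.2 = b), w₀ e) - dbar)
    (by
      rw [Finset.sum_sub_distrib, Finset.sum_fiberwise_of_maps_to (fun e he => (hE e he).2),
        Finset.sum_const, hB, nsmul_eq_mul, htot, sub_self]) hdegB
  refine ⟨fun e => w₀ e - δ e.1 e.2 - ε e.2 e.1, ?_, ?_, ?_⟩
  · intro a ha
    have h1 := hδA a ha
    have h2 := hεA a ha
    rw [hrow a ha] at h1 ⊢
    simp only [Finset.sum_sub_distrib]
    -- `convert` reconciles the decidability instances of the filters.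
    have h3 : ∑ b ∈ B.filter (fun b => (a, b) ∈ E), δ a b =
        ∑ b ∈ B.filter (fun b => (a, b) ∈ E), w₀ (a, b) - dbar := by convert h1
    have h4 : ∑ b ∈ B.filter (fun b => (a, b) ∈ E), ε b a = 0 := by convert h2
    linarith
  · intro b hb
    have h1 := hεB b hb
    have h2 := hδB b hb
    rw [hcol b hb] at h1 ⊢
    simp only [Finset.sum_sub_distrib]
    have h3 : ∑ a ∈ A.filter (fun a => (a, b) ∈ E), ε b a =
        ∑ a ∈ A.filter (fun a => (a, b) ∈ E), w₀ (a, b) - dbar := by convert h1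
    have h4 : ∑ a ∈ A.filter (fun a => (a, b) ∈ E), δ a b = 0 := by convert h2
    linarith
  · intro e he
    have h1 := abs_le.1 (hδ e.1 (hE e he).1 e.2)
    have h2 := abs_le.1 (hε e.2 (hE e he).2 e.1)
    have h3 : 2 * d' / c = d' / c + d' / c := by ring
    rw [h3, abs_le]
    constructor <;> linarith [h1.1, h1.2, h2.1, h2.2]
end

section
/- For any δ>0 and k∈ℕ there exists D₀ such that the following holds for all D ≥ D₀. Let H be a linear k-uniform hypergraph with maximum degree at most D, and let U ⊆ V(H) be a set of vertices all having degree at least (1−δ)D. Then there exists a matching in H which covers all but at most 2δ|U| of the vertices of U. -/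
/-!
The theorem follows from a weighted statement (`Nibble.exists_large_weight`): if `H` is linear and
`(r + 1)`-uniform with maximum degree at most `D`, and `D` is large, then for every weight `w` on the
edges some matching has weight at least `(1 - ε) w(H) / D`. Applied to `w e = #(e ∩ U)` this gives
`(1 - ε)(1 - δ) #U` covered vertices.

For the weighted statement, consider the following Markov chain on the set `A` of surviving
vertices. At time `t ∈ [0, T]`, with `x = exp (r t) / D`, every edge `e ⊆ A` is chosen (added to the
matching, its vertices removed from `A`) at rate `x`. Writing `S_v` for `x` times the current degree
of `v`, every vertex `v` is in addition killed at rate `(1 - S_v)⁺`. So `v` disappears at total rate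
`max 1 S_v`.

* As this rate is at least `1`, and by linearity few edges meet a fixed set `W` twice, `W` survives
  to time `t` with probability at most about `exp (-#W t)` (`expect_ind_le`). This needs no control
  of the degrees.
* Applied to unions of stars, this bounds the `m`-th moment of `S_v` on the event `e ⊆ A` for a fixed
  `v ∈ e`, and then Bernoulli's inequality `m (S - 1) ≤ S ^ m` shows that the expectation of
  `(S_v - 1)⁺` on that event is `O(1 / m)` (`excess_le`, `expect_excess_le`).
* Hence `e` dies at rate barely above `r + 1` and survives to time `t` with probability close to
  `exp (-(r + 1) t)` (`le_expect_ind`), so the probability that `e` is chosen is close to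
  `∫₀ᵀ x exp (-(r + 1) t) dt = (1 - exp (-T)) / D` (`integral_bound`).

The chain is run in discrete steps of length `h`, small in terms of `H`, with at most one event per
step. No probability space is needed: the chain is represented by its transition operators
`step` and the expectation functionals `expect` on functions of `A`.
-/

namespace Nibble

open Finset

variable {V : Type*} [DecidableEq V]

/-! ### The Markov chain -/

/-- Degree of `v` in the subhypergraph of `H` induced on `A`. -/
def deg (H : Finset (Finset V)) (A : Finset V) (v : V) : ℕ :=
  #{e ∈ H | e ⊆ A ∧ v ∈ e}

/-- The indicator, as a function of the set `A`, of the event `W ⊆ A`. -/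
def ind (W A : Finset V) : ℝ := if W ⊆ A then 1 else 0

/-- The rate `(1 - S_v)⁺` at which `v` is killed, on top of its removal by chosen edges. -/
def kill (H : Finset (Finset V)) (x : ℝ) (A : Finset V) (v : V) : ℝ :=
  max 0 (1 - x * deg H A v)

/-- The transition operator of one step of length `h`: it sends `f` to the function giving, for each
state `A`, the expected value of `f` after the step. Vertices of `V₀` outside `A` may be killed as
well, which has no effect. -/
def step (H : Finset (Finset V)) (V₀ : Finset V) (h x : ℝ) :
    (Finset V → ℝ) →ₗ[ℝ] (Finset V → ℝ) where
  toFun f A := f A + h * (∑ e ∈ H with e ⊆ A, x * (f (A \ e) - f A) +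
    ∑ v ∈ V₀, kill H x A v * (f (A.erase v) - f A))
  map_add' f g := by
    funext A
    have h1 : ∀ B, (f B + g B) - (f A + g A) = (f B - f A) + (g B - g A) := fun B => by ring
    simp only [Pi.add_apply, h1, mul_add, sum_add_distrib]
    ring
  map_smul' c f := by
    funext A
    have h1 : ∀ B, c * f B - c * f A = c * (f B - f A) := fun B => by ring
    have h2 : ∀ y z : ℝ, y * (c * z) = c * (y * z) := fun y z => by ring
    simp only [Pi.smul_apply, smul_eq_mul, h1, h2, RingHom.id_apply, ← mul_sum]
    ring

lemma step_apply (H : Finset (Finset V)) (V₀ : Finset V) (h x : ℝ) (f : Finset V → ℝ)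
    (A : Finset V) : step H V₀ h x f A = f A + h * (∑ e ∈ H with e ⊆ A, x * (f (A \ e) - f A) +
    ∑ v ∈ V₀, kill H x A v * (f (A.erase v) - f A)) := rfl

/-- The expectation of a function of the state after `n` steps, started from `V₀`. -/
def expect (H : Finset (Finset V)) (V₀ : Finset V) (h : ℝ) (x : ℕ → ℝ) :
    ℕ → (Finset V → ℝ) →ₗ[ℝ] ℝ
  | 0 => LinearMap.proj V₀
  | n + 1 => (expect H V₀ h x n).comp (step H V₀ h (x n))

lemma kill_nonneg (H : Finset (Finset V)) (x : ℝ) (A : Finset V) (v : V) :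
    0 ≤ kill H x A v := le_max_left _ _

lemma ind_nonneg (W A : Finset V) : 0 ≤ ind W A := by
  unfold ind; split_ifs <;> norm_num

lemma ind_le_one (W A : Finset V) : ind W A ≤ 1 := by
  unfold ind; split_ifs <;> norm_num

/-- The condition on `h` says that the total probability of an event in one step is at most `1`. -/
lemma step_nonneg {H : Finset (Finset V)} {V₀ : Finset V} {h x : ℝ} (hh : 0 ≤ h) (hx : 0 ≤ x)
    (hR : h * (x * #H + #V₀) ≤ 1) {f : Finset V → ℝ} (hf : ∀ A, 0 ≤ f A) (A : Finset V) :
    0 ≤ step H V₀ h x f A := by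
  have e1 : (∑ e ∈ H with e ⊆ A, x * (f (A \ e) - f A)) ≥ - (x * #H * f A) := by
    calc (∑ e ∈ H with e ⊆ A, x * (f (A \ e) - f A))
        ≥ ∑ e ∈ H with e ⊆ A, (- (x * f A)) :=
          sum_le_sum fun e _ => by nlinarith [mul_nonneg hx (hf (A \ e))]
      _ = - (x * #{e ∈ H | e ⊆ A} * f A) := by simp; ring
      _ ≥ _ := by
        have : (#{e ∈ H | e ⊆ A} : ℝ) ≤ #H := by exact_mod_cast card_filter_le _ _
        have := mul_le_mul_of_nonneg_left this (mul_nonneg hx (hf A))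
        linarith
  have e2 : (∑ v ∈ V₀, kill H x A v * (f (A.erase v) - f A)) ≥ - (#V₀ * f A) := by
    calc (∑ v ∈ V₀, kill H x A v * (f (A.erase v) - f A))
        ≥ ∑ v ∈ V₀, (- f A) := sum_le_sum fun v _ => by
          have k0 := kill_nonneg H x A v
          have k1 : kill H x A v ≤ 1 := max_le (by norm_num) (by
            have : 0 ≤ x * deg H A v := by positivity
            linarith)
          nlinarith [mul_nonneg k0 (hf (A.erase v)), hf A]
      _ = _ := by simp
  rw [step_apply]
  have := mul_le_mul_of_nonneg_left (add_le_add e1 e2) hh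
  have h3 := mul_le_mul_of_nonneg_right hR (hf A)
  nlinarith

lemma expect_mono {H : Finset (Finset V)} {V₀ : Finset V} {h : ℝ} {x : ℕ → ℝ} {N : ℕ}
    (hh : 0 ≤ h) (hx : ∀ i, 0 ≤ x i)
    (hR : ∀ i < N, h * (x i * #H + #V₀) ≤ 1) {n : ℕ} (hn : n ≤ N) {f g : Finset V → ℝ}
    (hfg : ∀ A, f A ≤ g A) : expect H V₀ h x n f ≤ expect H V₀ h x n g := by
  induction n generalizing f g with
  | zero => exact hfg V₀
  | succ n ih =>
    refine ih (by omega) fun A => ?_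
    have := step_nonneg (V₀ := V₀) hh (hx n) (hR n (by omega)) (f := g - f)
      (fun A => by simpa using hfg A) A
    rw [map_sub] at this
    simpa using this

lemma expect_one {H : Finset (Finset V)} {V₀ : Finset V} {h : ℝ} {x : ℕ → ℝ} (n : ℕ) :
    expect H V₀ h x n (fun _ => 1) = 1 := by
  induction n with
  | zero => rfl
  | succ n ih =>
    have : step H V₀ h (x n) (fun _ => 1) = fun _ => 1 := by
      funext A; simp [step_apply]
    simp [expect, this, ih]

lemma step_ind {H : Finset (Finset V)} {V₀ W : Finset V} (hW : W ⊆ V₀) (h x : ℝ) (A : Finset V) :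
    step H V₀ h x (ind W) A = (1 - h * (x * #{e ∈ H | e ⊆ A ∧ ¬ Disjoint e W} +
      ∑ v ∈ W, kill H x A v)) * ind W A := by
  rw [step_apply]
  by_cases hA : W ⊆ A
  · have e1 : ∀ e, ind W (A \ e) - ind W A = - if ¬ Disjoint e W then 1 else 0 := fun e => by
      have : W ⊆ A \ e ↔ Disjoint e W := by
        rw [subset_sdiff, disjoint_comm]; simp [hA]
      by_cases hd : Disjoint e W <;> simp [ind, this, hA, hd]
    have e2 : ∀ v, ind W (A.erase v) - ind W A = - if v ∈ W then 1 else 0 := fun v => by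
      have : W ⊆ A.erase v ↔ v ∉ W := by
        rw [subset_erase]; simp [hA]
      by_cases hd : v ∈ W <;> simp [ind, this, hA, hd]
    simp only [e1, e2, mul_neg, sum_neg_distrib, mul_ite, mul_one, mul_zero]
    rw [← sum_filter, ← sum_filter, filter_mem_eq_inter, inter_eq_right.2 hW, filter_filter,
      sum_const, nsmul_eq_mul]
    simp only [ind, hA, if_true]
    ring
  · have e1 : ∀ B ⊆ A, ind W B = 0 := fun B hB => by
      have : ¬ W ⊆ B := fun h' => hA (h'.trans hB)
      simp [ind, this]
    simp [e1 A subset_rfl, e1 _ sdiff_subset, e1 _ (erase_subset _ _)]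

/-! ### Survival probabilities -/

lemma sum_deg (H : Finset (Finset V)) (A W : Finset V) :
    ∑ v ∈ W, deg H A v = ∑ e ∈ H with e ⊆ A, #(e ∩ W) := by
  simp only [deg, card_eq_sum_ones, sum_filter, ← filter_mem_eq_inter]
  rw [sum_comm]
  refine sum_congr rfl fun e _ => ?_
  by_cases he : e ⊆ A
  · simp only [he, true_and, if_true]
    rw [← sum_filter, ← sum_filter, filter_mem_eq_inter, filter_mem_eq_inter, inter_comm]
  · simp [he]

lemma card_touch_le (H : Finset (Finset V)) (A W : Finset V) :
    #{e ∈ H | e ⊆ A ∧ ¬ Disjoint e W} ≤ ∑ v ∈ W, deg H A v := by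
  rw [sum_deg, ← filter_filter, card_filter]
  refine sum_le_sum fun e _ => ?_
  by_cases hd : Disjoint e W
  · simp [hd]
  · rw [if_pos hd]
    exact (not_disjoint_iff_nonempty_inter.1 hd).card_pos

/-- In a linear hypergraph, pairs of vertices of `W` lying in a common edge determine that edge, so the
degree sum over `W` overcounts the edges meeting `W` by at most `#W ^ 2`. -/
lemma le_card_touch {H : Finset (Finset V)}
    (hlin : ∀ e ∈ H, ∀ e' ∈ H, e ≠ e' → #(e ∩ e') ≤ 1) (A W : Finset V) :
    ∑ v ∈ W, deg H A v ≤ #{e ∈ H | e ⊆ A ∧ ¬ Disjoint e W} + #W ^ 2 := by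
  rw [sum_deg, ← filter_filter, card_filter]
  have h1 : ∑ e ∈ H with e ⊆ A, #(e ∩ W).offDiag ≤ #W ^ 2 := by
    rw [← card_biUnion]
    · calc _ ≤ #W.offDiag := card_le_card (biUnion_subset.2 fun e _ =>
            offDiag_mono inter_subset_right)
        _ ≤ _ := by rw [offDiag_card, sq]; omega
    · intro e he e' he' hne
      rw [Function.onFun, disjoint_left]
      rintro ⟨a, b⟩ h1 h2
      simp only [mem_offDiag, mem_inter] at h1 h2
      have := hlin e (mem_filter.1 he).1 e' (mem_filter.1 he').1 hne
      rw [card_le_one] at this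
      exact h1.2.2 (this a (mem_inter.2 ⟨h1.1.1, h2.1.1⟩) b (mem_inter.2 ⟨h1.2.1.1, h2.2.1.1⟩))
  refine le_trans ?_ (Nat.add_le_add_left h1 _)
  rw [← sum_add_distrib]
  refine sum_le_sum fun e _ => ?_
  rw [offDiag_card]
  by_cases hd : Disjoint e W
  · rw [disjoint_iff_inter_eq_empty] at hd
    simp [hd]
  · rw [if_pos hd]
    have : #(e ∩ W) * (#(e ∩ W)) + 1 ≥ 2 * #(e ∩ W) := by
      zify
      nlinarith [sq_nonneg ((#(e ∩ W) : ℤ) - 1)]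
    omega

/-- A set `W` survives `n` steps with probability at most about `exp (-n h #W)`, because each of its
vertices disappears at rate at least `1`. The term `X * #W ^ 2` accounts for edges meeting `W` in
several vertices. -/
lemma expect_ind_le {H : Finset (Finset V)} {V₀ : Finset V} {h X : ℝ} {x : ℕ → ℝ} {N : ℕ}
    (hlin : ∀ e ∈ H, ∀ e' ∈ H, e ≠ e' → #(e ∩ e') ≤ 1)
    (hh : 0 ≤ h) (hx : ∀ i, 0 ≤ x i) (hX : ∀ i < N, x i ≤ X)
    (hR : ∀ i < N, h * (x i * #H + #V₀) ≤ 1) {W : Finset V} (hW : W ⊆ V₀)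
    {n : ℕ} (hn : n ≤ N) :
    expect H V₀ h x n (ind W) ≤ Real.exp (n * h * (X * (#W : ℝ) ^ 2 - #W)) := by
  induction n with
  | zero => simpa [expect] using ind_le_one W V₀
  | succ n ih =>
    have key : ∀ A, step H V₀ h (x n) (ind W) A ≤
        (Real.exp (h * (X * (#W : ℝ) ^ 2 - #W)) • ind W) A := fun A => by
      rw [step_ind hW, Pi.smul_apply, smul_eq_mul]
      refine mul_le_mul_of_nonneg_right ?_ (ind_nonneg _ _)
      have h1 : (∑ v ∈ W, (deg H A v : ℝ)) ≤
          #{e ∈ H | e ⊆ A ∧ ¬ Disjoint e W} + (#W : ℝ) ^ 2 := by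
        exact_mod_cast le_card_touch hlin A W
      have h2 : ∑ v ∈ W, (1 - x n * (deg H A v : ℝ)) ≤ ∑ v ∈ W, kill H (x n) A v :=
        sum_le_sum fun v _ => le_max_right _ _
      rw [sum_sub_distrib, ← mul_sum, sum_const, nsmul_eq_mul, mul_one] at h2
      have h3 := mul_le_mul_of_nonneg_left h1 (hx n)
      have h4 : x n * (#W : ℝ) ^ 2 ≤ X * (#W : ℝ) ^ 2 :=
        mul_le_mul_of_nonneg_right (hX n (by omega)) (by positivity)
      have h5 : (#W : ℝ) - X * (#W : ℝ) ^ 2 ≤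
          x n * #{e ∈ H | e ⊆ A ∧ ¬ Disjoint e W} + ∑ v ∈ W, kill H (x n) A v := by linarith
      have h6 := mul_le_mul_of_nonneg_left h5 hh
      have h7 := Real.add_one_le_exp (h * (X * (#W : ℝ) ^ 2 - #W))
      linarith
    calc expect H V₀ h x (n + 1) (ind W) = expect H V₀ h x n (step H V₀ h (x n) (ind W)) := rfl
      _ ≤ _ := expect_mono hh hx hR (by omega) key
      _ = Real.exp (h * (X * (#W : ℝ) ^ 2 - #W)) * expect H V₀ h x n (ind W) := by
        rw [map_smul, smul_eq_mul]
      _ ≤ _ := mul_le_mul_of_nonneg_left (ih (by omega)) (Real.exp_pos _).le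
      _ = _ := by rw [← Real.exp_add]; push_cast; ring_nf

/-- By linearity, edges of a star pairwise meet only in the centre, which determines the size of their
union. -/
lemma card_star {H : Finset (Finset V)} {r : ℕ} (hk : ∀ e ∈ H, #e = r + 1)
    (hlin : ∀ e ∈ H, ∀ e' ∈ H, e ≠ e' → #(e ∩ e') ≤ 1) {G : Finset (Finset V)} (hG : G ⊆ H)
    (hne : G.Nonempty) {v : V} (hv : ∀ e ∈ G, v ∈ e) : #(G.biUnion id) = #G * r + 1 := by
  have h1 : (G.biUnion id).erase v = G.biUnion (fun e => e.erase v) := by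
    ext a; simp only [mem_erase, mem_biUnion, id]; grind
  have h2 : v ∈ G.biUnion id := by
    obtain ⟨e, he⟩ := hne
    exact mem_biUnion.2 ⟨e, he, hv e he⟩
  rw [← card_erase_add_one h2, h1, card_biUnion]
  · rw [sum_const_nat (m := r)]
    intro e he
    rw [card_erase_of_mem (hv e he), hk e (hG he)]; rfl
  · intro e he e' he' hne
    rw [Function.onFun, disjoint_left]
    intro a h1 h2
    rw [mem_erase] at h1 h2
    have := hlin e (hG he) e' (hG he') hne
    rw [card_le_one] at this
    exact h1.1 (this a (mem_inter.2 ⟨h1.2, h2.2⟩) v (mem_inter.2 ⟨hv e he, hv e' he'⟩))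

/-- On the event `e ⊆ A`, the excess `(S - 1)⁺` of `S = x * deg v` is bounded by `1 / m` times a
normalised count of the `m`-subsets of the edges at `v` other than `e` inside `A`, up to a small
additive error. Counting subsets (not tuples) keeps all star unions of equal size. -/
lemma excess_le {H : Finset (Finset V)} {x : ℝ} (hx : 0 ≤ x) {m : ℕ} (hm : 0 < m)
    (hxm : x * m ≤ 1) {e : Finset V} (he : e ∈ H) {v : V} (hv : v ∈ e) (A : Finset V) :
    max 0 (x * deg H A v - 1) * ind e A ≤
      x ^ m / m * m.factorial *
        ∑ F ∈ powersetCard m ({f ∈ H | v ∈ f}.erase e), ind ((insert e F).biUnion id) A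
      + x * m := by
  have hs : 0 ≤ ∑ F ∈ powersetCard m ({f ∈ H | v ∈ f}.erase e),
      ind ((insert e F).biUnion id) A := sum_nonneg fun _ _ => ind_nonneg _ _
  have hrhs : 0 ≤ x ^ m / m * m.factorial *
        ∑ F ∈ powersetCard m ({f ∈ H | v ∈ f}.erase e), ind ((insert e F).biUnion id) A
      + x * m := by positivity
  by_cases heA : e ⊆ A
  swap
  · simpa [ind, heA] using hrhs
  rcases le_or_gt (x * deg H A v - 1) 0 with hS | hS
  · simpa [max_eq_left hS] using hrhs
  set d := deg H A v with hd
  have hind : ind e A = 1 := by simp [ind, heA]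
  rw [max_eq_right hS.le, hind, mul_one]
  have hmem : e ∈ {f ∈ H | f ⊆ A ∧ v ∈ f} := mem_filter.2 ⟨he, heA, hv⟩
  have h1 : ((d - 1).choose m : ℝ) ≤ ∑ F ∈ powersetCard m ({f ∈ H | v ∈ f}.erase e),
      ind ((insert e F).biUnion id) A := by
    have hsub : powersetCard m ({f ∈ H | f ⊆ A ∧ v ∈ f}.erase e) ⊆
        powersetCard m ({f ∈ H | v ∈ f}.erase e) :=
      powersetCard_mono (erase_subset_erase _ (fun f hf => by grind))
    refine le_trans (le_of_eq ?_) (sum_le_sum_of_subset_of_nonneg hsub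
      fun _ _ _ => ind_nonneg _ _)
    rw [sum_congr rfl (g := fun _ => (1 : ℝ)), sum_const, card_powersetCard,
      card_erase_of_mem hmem, nsmul_eq_mul, mul_one, hd, deg]
    intro F hF
    rw [ind, if_pos]
    rw [biUnion_subset]
    intro f hf
    rcases mem_insert.1 hf with rfl | hf
    · exact heA
    · have := (mem_powersetCard.1 hF).1 hf
      grind
  have hmd : (m : ℝ) ≤ d := by
    by_contra! hlt
    have := mul_le_mul_of_nonneg_left hlt.le hx
    linarith
  have hmd' : m ≤ d := by exact_mod_cast hmd
  have h2 : ((d : ℝ) - m) ^ m ≤ m.factorial * ((d - 1).choose m : ℝ) := by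
    have := Nat.pow_sub_le_descFactorial (d - 1) m
    rw [Nat.descFactorial_eq_factorial_mul_choose, show d - 1 + 1 - m = d - m by omega] at this
    rw [← Nat.cast_sub hmd']
    exact_mod_cast this
  -- Bernoulli's inequality
  have h3 : 1 + m * (x * (d - m) - 1) ≤ (x * ((d : ℝ) - m)) ^ m := by
    have := one_add_mul_le_pow (a := x * ((d : ℝ) - m) - 1)
      (by have := mul_nonneg hx (sub_nonneg.2 hmd); linarith) m
    simpa using this
  have hm' : (0 : ℝ) < m := by exact_mod_cast hm
  have h4 : x ^ m * ((d : ℝ) - m) ^ m ≤ x ^ m * (m.factorial *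
      ∑ F ∈ powersetCard m ({f ∈ H | v ∈ f}.erase e), ind ((insert e F).biUnion id) A) :=
    mul_le_mul_of_nonneg_left (h2.trans (mul_le_mul_of_nonneg_left h1 (by positivity)))
      (by positivity)
  rw [mul_pow] at h3
  have h5 : m * (x * (d - m) - 1) ≤ x ^ m * (m.factorial *
      ∑ F ∈ powersetCard m ({f ∈ H | v ∈ f}.erase e), ind ((insert e F).biUnion id) A) := by
    linarith
  have h6 := (le_div_iff₀' hm').2 h5
  calc x * d - 1 = (x * (d - m) - 1) + x * m := by ring
    _ ≤ _ := add_le_add_left h6 _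
    _ = _ := by ring

/-- The conditional excess `(S_v - 1)⁺` is `O(1 / m)` on average, where `S_v = x * deg v`.  The union
of a star of `m + 1` edges has `(m + 1) r + 1` vertices, so by `expect_ind_le` it survives to time
`t = n h` with probability at most about `exp (-((m + 1) r + 1) t)`.  There are at most `D ^ m / m!`
stars of `m` edges to add to `e`, and the factor `x ^ m = exp (r m t) / D ^ m` makes up for both. -/
lemma expect_excess_le {H : Finset (Finset V)} {r m N : ℕ} {D T h X : ℝ} {x : ℕ → ℝ}
    (hk : ∀ e ∈ H, #e = r + 1) (hlin : ∀ e ∈ H, ∀ e' ∈ H, e ≠ e' → #(e ∩ e') ≤ 1)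
    (hD : 0 < D) (hdeg : ∀ v, (#{e ∈ H | v ∈ e} : ℝ) ≤ D) (hh : 0 ≤ h) (hT : N * h = T)
    (hx : ∀ i, x i = Real.exp (r * (i * h)) / D) (hX : ∀ i < N, x i ≤ X)
    (hR : ∀ i < N, h * (x i * #H + #(H.biUnion id)) ≤ 1) (hm : 0 < m)
    (hexp : Real.exp (T * (X * ((m + 1) * r + 1 : ℝ) ^ 2)) ≤ 2) (hXm : X * m ≤ 1 / m)
    {e : Finset V} (he : e ∈ H) {v : V} (hv : v ∈ e) {n : ℕ} (hn : n < N) :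
    expect H (H.biUnion id) h x n (fun A => max 0 (x n * deg H A v - 1) * ind e A) ≤ 3 / m := by
  have hx0 : ∀ i, 0 ≤ x i := fun i => by rw [hx]; positivity
  have hm1 : (1 : ℝ) ≤ m := by exact_mod_cast hm
  have hm0 : (0 : ℝ) < m := by linarith
  have hX0 : 0 ≤ X := (hx0 n).trans (hX n hn)
  have hxm' : x n * m ≤ 1 / m := (mul_le_mul_of_nonneg_right (hX n hn) hm0.le).trans hXm
  have hxm : x n * m ≤ 1 := hxm'.trans ((div_le_one hm0).2 hm1)
  set S := powersetCard m ({f ∈ H | v ∈ f}.erase e) with hS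
  have hterm : ∀ F ∈ S, expect H (H.biUnion id) h x n (ind ((insert e F).biUnion id)) ≤
      Real.exp (- (r * (n * h) * m)) * 2 := by
    intro F hF
    obtain ⟨hF1, hF2⟩ := mem_powersetCard.1 hF
    have heF : e ∉ F := fun h' => by simpa using hF1 h'
    have hG : insert e F ⊆ H := insert_subset he fun f hf => by
      have := hF1 hf; grind
    have hc : #((insert e F).biUnion id) = (m + 1) * r + 1 := by
      rw [card_star hk hlin hG (insert_nonempty _ _) (v := v), card_insert_of_notMem heF, hF2]
      intro f hf
      rcases mem_insert.1 hf with rfl | hf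
      · exact hv
      · have := hF1 hf; grind
    refine (expect_ind_le hlin hh hx0 hX hR (biUnion_subset_biUnion_of_subset_left _ hG)
      hn.le).trans ?_
    rw [hc]
    push_cast
    have hnT : n * h ≤ T := by
      rw [← hT]; exact mul_le_mul_of_nonneg_right (by exact_mod_cast hn.le) hh
    have hnh : 0 ≤ n * h := by positivity
    calc Real.exp (n * h * (X * ((m + 1) * r + 1 : ℝ) ^ 2 - ((m + 1) * r + 1)))
        ≤ Real.exp (- (r * (n * h) * m) + T * (X * ((m + 1) * r + 1 : ℝ) ^ 2)) := by
          rw [Real.exp_le_exp]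
          have h1 := mul_le_mul_of_nonneg_right hnT
            (show 0 ≤ X * ((m + 1) * r + 1 : ℝ) ^ 2 by positivity)
          have h2 : 0 ≤ n * h * (r + 1) := by positivity
          nlinarith
      _ ≤ _ := by
          rw [Real.exp_add]
          exact mul_le_mul_of_nonneg_left hexp (Real.exp_pos _).le
  have hcount : (m.factorial : ℝ) * #S ≤ D ^ m := by
    have h1 : #({f ∈ H | v ∈ f}.erase e) ≤ #{f ∈ H | v ∈ f} := card_erase_le
    have h2 : m.factorial * #S ≤ #{f ∈ H | v ∈ f} ^ m := by
      rw [hS, card_powersetCard, ← Nat.descFactorial_eq_factorial_mul_choose]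
      exact (Nat.descFactorial_le_pow _ _).trans (Nat.pow_le_pow_left h1 m)
    calc (m.factorial : ℝ) * #S ≤ (#{f ∈ H | v ∈ f} : ℝ) ^ m := by exact_mod_cast h2
      _ ≤ D ^ m := pow_le_pow_left₀ (by positivity) (hdeg v) m
  have hle : ∀ A, max 0 (x n * deg H A v - 1) * ind e A ≤
      ((x n ^ m / m * m.factorial) • (∑ F ∈ S, ind ((insert e F).biUnion id)) +
        (x n * m) • (fun _ => (1 : ℝ)) : Finset V → ℝ) A := fun A => by
    simpa using excess_le (hx0 n) hm hxm he hv A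
  refine (expect_mono hh hx0 hR hn.le hle).trans ?_
  rw [map_add, map_smul, map_smul, expect_one, map_sum, smul_eq_mul, smul_eq_mul, mul_one]
  have hsum : ∑ F ∈ S, expect H (H.biUnion id) h x n (ind ((insert e F).biUnion id)) ≤
      #S * (Real.exp (- (r * (n * h) * m)) * 2) := by
    rw [← nsmul_eq_mul]; exact sum_le_card_nsmul _ _ _ hterm
  have hxp : x n ^ m * D ^ m = Real.exp (r * (n * h) * m) := by
    rw [← mul_pow, hx, div_mul_cancel₀ _ hD.ne', ← Real.exp_nat_mul]
    ring_nf
  have h1 : x n ^ m / m * m.factorial *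
      ∑ F ∈ S, expect H (H.biUnion id) h x n (ind ((insert e F).biUnion id)) ≤ 2 / m := by
    calc _ ≤ x n ^ m / m * m.factorial * (#S * (Real.exp (- (r * (n * h) * m)) * 2)) :=
          mul_le_mul_of_nonneg_left hsum (by have := hx0 n; positivity)
      _ = x n ^ m * (m.factorial * #S) * (Real.exp (- (r * (n * h) * m)) * 2 / m) := by ring
      _ ≤ x n ^ m * D ^ m * (Real.exp (- (r * (n * h) * m)) * 2 / m) := by
          have := hx0 n; gcongr
      _ = _ := by
          rw [hxp, mul_div_assoc, ← mul_assoc, ← Real.exp_add, add_neg_cancel, Real.exp_zero,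
            one_mul]
  calc _ ≤ 2 / (m : ℝ) + 1 / m := add_le_add h1 hxm'
    _ = _ := by ring

/-- Every edge `e` survives to time `n h` with probability almost `exp (-(r + 1) n h)`: it is destroyed
at rate at most `∑ v ∈ e, max 1 S_v = (r + 1) + ∑ v ∈ e, (S_v - 1)⁺`, and the second sum contributes
little on average. -/
lemma le_expect_ind {H : Finset (Finset V)} {r N : ℕ} {h η : ℝ} {x : ℕ → ℝ}
    (hk : ∀ e ∈ H, #e = r + 1) (hh : 0 ≤ h) (hx0 : ∀ i, 0 ≤ x i)
    (hR : ∀ i < N, h * (x i * #H + #(H.biUnion id)) ≤ 1) (hhk : h * (r + 1) ≤ 1)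
    {e : Finset V} (he : e ∈ H)
    (hη : ∀ v ∈ e, ∀ n < N, expect H (H.biUnion id) h x n
      (fun A => max 0 (x n * deg H A v - 1) * ind e A) ≤ η) (hη0 : 0 ≤ η) {n : ℕ} (hn : n ≤ N) :
    (1 - h * (r + 1)) ^ n - n * (h * (r + 1) * η) ≤ expect H (H.biUnion id) h x n (ind e) := by
  have hsub : e ⊆ H.biUnion id := subset_biUnion_of_mem id he
  induction n with
  | zero => simp [expect, ind, hsub]
  | succ n ih =>
    have key : ∀ A, ((1 - h * (r + 1)) • ind e - h • ∑ v ∈ e,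
        (fun A => max 0 (x n * deg H A v - 1) * ind e A)) A ≤
        step H (H.biUnion id) h (x n) (ind e) A := fun A => by
      rw [step_ind hsub]
      simp only [Pi.sub_apply, Pi.smul_apply, smul_eq_mul, Finset.sum_apply, ← sum_mul]
      rw [← mul_assoc, ← sub_mul]
      refine mul_le_mul_of_nonneg_right ?_ (ind_nonneg _ _)
      have h1 : (#{f ∈ H | f ⊆ A ∧ ¬ Disjoint f e} : ℝ) ≤ ∑ v ∈ e, (deg H A v : ℝ) := by
        exact_mod_cast card_touch_le H A e
      have h2 := mul_le_mul_of_nonneg_left h1 (hx0 n)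
      have h3 : ∑ v ∈ e, (x n * deg H A v + kill H (x n) A v) =
          ∑ v ∈ e, (1 + max 0 (x n * deg H A v - 1)) := sum_congr rfl fun v _ => by
        unfold kill
        rcases le_total (x n * deg H A v) 1 with h' | h'
        · rw [max_eq_right (by linarith), max_eq_left (by linarith)]; ring
        · rw [max_eq_left (by linarith), max_eq_right (by linarith)]; ring
      rw [sum_add_distrib, sum_add_distrib, sum_const, nsmul_eq_mul, hk e he, ← mul_sum] at h3
      push_cast at h3
      have h4 : x n * #{f ∈ H | f ⊆ A ∧ ¬ Disjoint f e} + ∑ v ∈ e, kill H (x n) A v ≤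
        (r + 1) + ∑ v ∈ e, max 0 (x n * deg H A v - 1) := by linarith
      have := mul_le_mul_of_nonneg_left h4 hh
      linarith
    have h1 := expect_mono hh hx0 hR (by omega : n ≤ N) key
    rw [map_sub, map_smul, map_smul, map_sum, smul_eq_mul, smul_eq_mul] at h1
    have h2 : ∑ v ∈ e, expect H (H.biUnion id) h x n
        (fun A => max 0 (x n * deg H A v - 1) * ind e A) ≤ (r + 1) * η := by
      refine (sum_le_card_nsmul _ _ η fun v hv => hη v hv n (by omega)).trans (le_of_eq ?_)
      rw [hk e he, nsmul_eq_mul]; push_cast; rfl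
    have h3 := mul_le_mul_of_nonneg_left h2 hh
    have hq : 0 ≤ 1 - h * (r + 1) := by linarith
    have h4 := mul_le_mul_of_nonneg_left (ih (by omega)) hq
    have h5 : 0 ≤ h * (r + 1) * (n * (h * (r + 1) * η)) := by positivity
    change _ ≤ expect H (H.biUnion id) h x n (step H (H.biUnion id) h (x n) (ind e))
    push_cast
    rw [pow_succ]
    linarith

/-! ### Summing over time -/

/-- A Riemann-sum version of `∫₀ᵀ exp (r t) exp (-(r + 1) t) dt = 1 - exp (-T)`, with the error terms
of `le_expect_ind` included. -/
lemma integral_bound {r N : ℕ} {T h τ η : ℝ} {a : ℕ → ℝ} (hh : 0 < h) (hT : N * h = T)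
    (hτ : 0 < τ) (hhk : h * (r + 1) ≤ 1) (hhτ : h * (r + 1 : ℝ) ^ 2 ≤ τ)
    (hTτ : Real.exp (-T) ≤ τ) (hη0 : 0 ≤ η)
    (hη : T * (Real.exp (r * T) * (T * ((r + 1) * η))) ≤ τ)
    (ha : ∀ n < N, (1 - h * (r + 1)) ^ n - n * (h * (r + 1) * η) ≤ a n) :
    1 - 3 * τ ≤ ∑ n ∈ range N, h * (Real.exp (r * (n * h)) * a n) := by
  set q := Real.exp (r * h) * (1 - h * (r + 1)) with hq
  set B := Real.exp (r * T) * (T * ((r + 1) * η)) with hB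
  have hk0 : 0 ≤ 1 - h * (r + 1) := by linarith
  have hq0 : 0 ≤ q := mul_nonneg (Real.exp_pos _).le hk0
  have hT0 : 0 ≤ T := by rw [← hT]; positivity
  have h1 : ∀ n ∈ range N, h * q ^ n - h * B ≤ h * (Real.exp (r * (n * h)) * a n) := by
    intro n hn
    rw [mem_range] at hn
    rw [← mul_sub]
    refine mul_le_mul_of_nonneg_left ?_ hh.le
    have hnT : n * h ≤ T := by
      rw [← hT]; exact mul_le_mul_of_nonneg_right (by exact_mod_cast hn.le) hh.le
    have e1 : q ^ n = Real.exp (r * (n * h)) * (1 - h * (r + 1)) ^ n := by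
      rw [hq, mul_pow, ← Real.exp_nat_mul]; ring_nf
    have e2 : Real.exp (r * (n * h)) * (n * (h * (r + 1) * η)) ≤ B := by
      rw [hB, show n * (h * (r + 1) * η) = (n * h) * ((r + 1) * η) by ring]
      gcongr
    have e3 := mul_le_mul_of_nonneg_left (ha n hn) (Real.exp_pos (r * (n * h))).le
    rw [e1]; linarith
  refine le_trans ?_ (sum_le_sum h1)
  rw [sum_sub_distrib, ← mul_sum, sum_const, card_range, nsmul_eq_mul, ← mul_assoc, hT]
  have hgeom := mul_neg_geom_sum q N
  have hs0 : 0 ≤ ∑ n ∈ range N, q ^ n := sum_nonneg fun _ _ => by positivity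
  have hqN : q ^ N ≤ τ := by
    have : q ≤ Real.exp (-h) := by
      have := Real.add_one_le_exp (- (h * (r + 1)))
      calc q ≤ Real.exp (r * h) * Real.exp (- (h * (r + 1))) :=
            mul_le_mul_of_nonneg_left (by linarith) (Real.exp_pos _).le
        _ = _ := by rw [← Real.exp_add]; ring_nf
    calc q ^ N ≤ Real.exp (-h) ^ N := pow_le_pow_left₀ hq0 this N
      _ = Real.exp (-T) := by rw [← Real.exp_nat_mul, ← hT]; ring_nf
      _ ≤ τ := hTτ
  have hq1 : 1 - q ≤ h * (1 + τ) := by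
    have e1 := Real.add_one_le_exp (r * h)
    have e2 := mul_le_mul_of_nonneg_right e1 hk0
    have e3 : (r : ℝ) * (r + 1) ≤ (r + 1) ^ 2 := by nlinarith [(Nat.cast_nonneg r : (0:ℝ) ≤ r)]
    have e4 : h * (h * (r * (r + 1))) ≤ h * τ :=
      mul_le_mul_of_nonneg_left ((mul_le_mul_of_nonneg_left e3 hh.le).trans hhτ) hh.le
    nlinarith
  have h2 := mul_le_mul_of_nonneg_right hq1 hs0
  set Q := h * ∑ n ∈ range N, q ^ n with hQ
  have h3 : 1 - τ ≤ Q * (1 + τ) := by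
    rw [hQ]; linarith
  have h4 : 1 - 2 * τ ≤ Q := by
    by_contra! hlt
    have := mul_lt_mul_of_pos_right hlt (show 0 < 1 + τ by linarith)
    nlinarith
  linarith

/-! ### Weights of matchings -/

/-- The matchings of `H` all of whose edges lie inside `A`. -/
def matchings (H : Finset (Finset V)) (A : Finset V) : Finset (Finset (Finset V)) :=
  {M ∈ H.powerset | (∀ e ∈ M, e ⊆ A) ∧ ∀ e ∈ M, ∀ e' ∈ M, e ≠ e' → Disjoint e e'}

/-- The largest `w`-weight of a matching of `H` inside `A`. -/
def nu (H : Finset (Finset V)) (w : Finset V → ℕ) (A : Finset V) : ℕ :=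
  (matchings H A).sup fun M => ∑ e ∈ M, w e

lemma mem_matchings {H : Finset (Finset V)} {A : Finset V} {M : Finset (Finset V)} :
    M ∈ matchings H A ↔ M ⊆ H ∧ (∀ e ∈ M, e ⊆ A) ∧
      ∀ e ∈ M, ∀ e' ∈ M, e ≠ e' → Disjoint e e' := by
  simp [matchings]

lemma nu_mono (H : Finset (Finset V)) (w : Finset V → ℕ) {A B : Finset V} (hAB : A ⊆ B) :
    nu H w A ≤ nu H w B :=
  sup_mono fun M hM => by
    rw [mem_matchings] at hM ⊢
    exact ⟨hM.1, fun e he => (hM.2.1 e he).trans hAB, hM.2.2⟩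

lemma exists_matching (H : Finset (Finset V)) (w : Finset V → ℕ) (A : Finset V) :
    ∃ M ∈ matchings H A, nu H w A = ∑ e ∈ M, w e :=
  exists_mem_eq_sup _ ⟨∅, by simp [mem_matchings]⟩ _

lemma add_nu_le {H : Finset (Finset V)} (w : Finset V → ℕ) {A e : Finset V} (he : e ∈ H)
    (hne : e.Nonempty) (heA : e ⊆ A) : w e + nu H w (A \ e) ≤ nu H w A := by
  obtain ⟨M, hM, hMw⟩ := exists_matching H w (A \ e)
  rw [mem_matchings] at hM
  have hdis : ∀ f ∈ M, Disjoint f e := fun f hf => (subset_sdiff.1 (hM.2.1 f hf)).2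
  have heM : e ∉ M := fun h' => hne.ne_empty (disjoint_self.1 (hdis e h'))
  rw [hMw, ← sum_insert heM]
  refine le_sup (f := fun M => ∑ e ∈ M, w e) (mem_matchings.2 ⟨insert_subset he hM.1, ?_, ?_⟩)
  · intro f hf
    rcases mem_insert.1 hf with rfl | hf
    · exact heA
    · exact (hM.2.1 f hf).trans sdiff_subset
  · intro f hf g hg hfg
    rcases mem_insert.1 hf with hf' | hf' <;> rcases mem_insert.1 hg with hg' | hg'
    · exact absurd (hf'.trans hg'.symm) hfg
    · exact hf' ▸ (hdis g hg').symm
    · exact hg' ▸ hdis f hf'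
    · exact hM.2.2 f hf' g hg' hfg

/-- Since `nu` drops by at least `w e` whenever `e` is chosen and never increases, the expected total
weight of the chosen edges is at most the initial value of `nu`. -/
lemma sum_le_nu {H : Finset (Finset V)} {V₀ : Finset V} {h : ℝ} {x : ℕ → ℝ} {N : ℕ}
    (hne : ∀ e ∈ H, e.Nonempty) (hh : 0 ≤ h) (hx : ∀ i, 0 ≤ x i)
    (hR : ∀ i < N, h * (x i * #H + #V₀) ≤ 1) (w : Finset V → ℕ) {n : ℕ} (hn : n ≤ N) :
    (∑ i ∈ range n, h * (x i * ∑ e ∈ H, w e * expect H V₀ h x i (ind e))) +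
      expect H V₀ h x n (fun A => (nu H w A : ℝ)) ≤ nu H w V₀ := by
  induction n with
  | zero => simp [expect]
  | succ n ih =>
    have key : ∀ A, step H V₀ h (x n) (fun A => (nu H w A : ℝ)) A ≤
        ((fun A => (nu H w A : ℝ)) - (h * x n) • ∑ e ∈ H, (w e : ℝ) • ind e) A := fun A => by
      have h1 : (∑ e ∈ H with e ⊆ A, x n * ((nu H w (A \ e) : ℝ) - nu H w A)) ≤
          - (x n * ∑ e ∈ H, w e * ind e A) := by
        rw [sum_filter, mul_sum, ← sum_neg_distrib]
        refine sum_le_sum fun e he => ?_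
        split_ifs with heA
        · have : (w e : ℝ) + nu H w (A \ e) ≤ nu H w A := by
            exact_mod_cast add_nu_le w he (hne e he) heA
          rw [ind, if_pos heA, ← mul_neg]
          exact mul_le_mul_of_nonneg_left (by linarith) (hx n)
        · simp [ind, heA]
      have h2 : (∑ v ∈ V₀, kill H (x n) A v * ((nu H w (A.erase v) : ℝ) - nu H w A)) ≤ 0 :=
        sum_nonpos fun v _ => mul_nonpos_of_nonneg_of_nonpos (kill_nonneg _ _ _ _) (by
          have : (nu H w (A.erase v) : ℝ) ≤ nu H w A := by
            exact_mod_cast nu_mono H w (erase_subset v A)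
          linarith)
      have h3 := mul_le_mul_of_nonneg_left (add_le_add h1 h2) hh
      rw [step_apply]
      simp only [Pi.sub_apply, Pi.smul_apply, smul_eq_mul, Finset.sum_apply]
      linarith
    have h1 := expect_mono hh hx hR (by omega : n ≤ N) key
    rw [map_sub, map_smul, map_sum] at h1
    simp only [map_smul, smul_eq_mul] at h1
    have h2 := ih (by omega)
    rw [sum_range_succ]
    change _ + expect H V₀ h x n (step H V₀ h (x n) _) ≤ _
    linarith

/-- Weighted form of the result: some matching carries a `(1 - 3τ) / D` fraction of the total weight
of the edges.  No lower bound on the degrees is needed. -/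
theorem exists_large_weight {τ : ℝ} (hτ : 0 < τ) (r : ℕ) :
    ∃ D₀ : ℝ, 0 < D₀ ∧ ∀ D : ℝ, D₀ ≤ D → ∀ (V : Type*) [DecidableEq V] (H : Finset (Finset V)),
      (∀ e ∈ H, #e = r + 1) → (∀ e ∈ H, ∀ e' ∈ H, e ≠ e' → #(e ∩ e') ≤ 1) →
      (∀ v, (#{e ∈ H | v ∈ e} : ℝ) ≤ D) → ∀ w : Finset V → ℕ,
      ∃ M ⊆ H, (∀ e ∈ M, ∀ e' ∈ M, e ≠ e' → Disjoint e e') ∧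
        (1 - 3 * τ) * ∑ e ∈ H, (w e : ℝ) ≤ D * ∑ e ∈ M, (w e : ℝ) := by
  -- The constants are chosen in the order `T` (running time), `m` (moment), `D₀`, and finally the
  -- number of steps `N`, which alone may depend on the hypergraph.
  obtain ⟨T, hT0, hTτ⟩ : ∃ T : ℝ, 0 < T ∧ Real.exp (-T) ≤ τ := by
    refine ⟨max 1 (-Real.log τ), by positivity, ?_⟩
    rw [← Real.le_log_iff_exp_le hτ]
    linarith [le_max_right 1 (-Real.log τ)]
  obtain ⟨m, hm⟩ := exists_nat_ge (1 + 3 * (T * (Real.exp (r * T) * (T * (r + 1)))) / τ)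
  have hm1 : (1 : ℝ) ≤ m := by
    have : 0 ≤ 3 * (T * (Real.exp (r * T) * (T * (r + 1)))) / τ := by positivity
    linarith
  have hm0 : (0 : ℝ) < m := by linarith
  have hη : T * (Real.exp (r * T) * (T * ((r + 1) * (3 / m)))) ≤ τ := by
    have h1 : 3 * (T * (Real.exp (r * T) * (T * (r + 1)))) / τ ≤ m := by linarith
    rw [div_le_iff₀ hτ] at h1
    rw [show T * (Real.exp (r * T) * (T * ((r + 1) * (3 / m)))) =
      3 * (T * (Real.exp (r * T) * (T * (r + 1)))) / m by ring, div_le_iff₀ hm0]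
    linarith
  set c : ℝ := (m + 1) * r + 1 with hc
  refine ⟨1 + 2 * (T * Real.exp (r * T) * c ^ 2) + Real.exp (r * T) * m ^ 2, by positivity, ?_⟩
  intro D hD V _ H hk hlin hdeg w
  have p1 : 0 ≤ T * Real.exp (r * T) * c ^ 2 := by positivity
  have p2 : 0 ≤ Real.exp (r * T) * (m : ℝ) ^ 2 := by positivity
  have hD0 : 0 < D := by linarith
  set X := Real.exp (r * T) / D with hXdef
  have hX0 : 0 ≤ X := by positivity
  have hXm : X * m ≤ 1 / m := by
    rw [hXdef, le_div_iff₀ hm0, div_mul_eq_mul_div, div_mul_eq_mul_div, div_le_one hD0]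
    nlinarith
  have hexp : Real.exp (T * (X * c ^ 2)) ≤ 2 := by
    rw [← Real.le_log_iff_exp_le (by norm_num)]
    have : T * (X * c ^ 2) ≤ 1 / 2 := by
      rw [hXdef, show T * (Real.exp (r * T) / D * c ^ 2) = T * Real.exp (r * T) * c ^ 2 / D by ring,
        div_le_iff₀ hD0]
      linarith
    linarith [Real.log_two_gt_d9]
  obtain ⟨N, hN⟩ := exists_nat_ge
    (1 + T * (X * #H + #(H.biUnion id)) + T * (r + 1) + T * (r + 1) ^ 2 / τ)
  have q1 : 0 ≤ T * (X * #H + #(H.biUnion id)) := by positivity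
  have q2 : 0 ≤ T * (r + 1) := by positivity
  have q3 : 0 ≤ T * (r + 1) ^ 2 / τ := by positivity
  have hN0 : (0 : ℝ) < N := by linarith
  set h := T / N with hhdef
  have hh : 0 < h := by positivity
  have hNT : N * h = T := by rw [hhdef]; field_simp
  have hhk : h * (r + 1) ≤ 1 := by
    rw [hhdef, div_mul_eq_mul_div, div_le_one hN0]; linarith
  have hhτ : h * (r + 1 : ℝ) ^ 2 ≤ τ := by
    rw [hhdef, div_mul_eq_mul_div, div_le_iff₀ hN0, ← div_le_iff₀' hτ]; linarith
  set x : ℕ → ℝ := fun i => Real.exp (r * (i * h)) / D with hxdef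
  have hx0 : ∀ i, 0 ≤ x i := fun i => by positivity
  have hX : ∀ i < N, x i ≤ X := fun i hi => by
    have : i * h ≤ T := by
      rw [← hNT]; exact mul_le_mul_of_nonneg_right (by exact_mod_cast hi.le) hh.le
    simp only [hxdef, hXdef]
    gcongr
  have hR : ∀ i < N, h * (x i * #H + #(H.biUnion id)) ≤ 1 := fun i hi => by
    calc h * (x i * #H + #(H.biUnion id)) ≤ h * (X * #H + #(H.biUnion id)) := by
          gcongr; exact hX i hi
      _ ≤ 1 := by rw [hhdef, div_mul_eq_mul_div, div_le_one hN0]; linarith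
  have hmpos : 0 < m := by exact_mod_cast hm0
  have hedge : ∀ e ∈ H, 1 - 3 * τ ≤ ∑ n ∈ range N,
      h * (Real.exp (r * (n * h)) * expect H (H.biUnion id) h x n (ind e)) := fun e he =>
    integral_bound hh hNT hτ hhk hhτ hTτ (by positivity) hη fun n hn =>
      le_expect_ind hk hh.le hx0 hR hhk he (fun v hv i hi =>
        expect_excess_le hk hlin hD0 hdeg hh.le hNT (fun _ => rfl) hX hR hmpos hexp hXm he hv hi)
        (by positivity) hn.le
  have hnu := sum_le_nu (V₀ := H.biUnion id) (n := N)
    (fun e he => card_pos.1 (by rw [hk e he]; omega)) hh.le hx0 hR w le_rfl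
  have hnu0 : 0 ≤ expect H (H.biUnion id) h x N (fun A => (nu H w A : ℝ)) := by
    rw [← map_zero (expect H (H.biUnion id) h x N)]
    exact expect_mono hh.le hx0 hR le_rfl fun A => by simp
  obtain ⟨M, hM, hMw⟩ := exists_matching H w (H.biUnion id)
  rw [mem_matchings] at hM
  refine ⟨M, hM.1, hM.2.2, ?_⟩
  rw [hMw, Nat.cast_sum] at hnu
  calc (1 - 3 * τ) * ∑ e ∈ H, (w e : ℝ)
      = ∑ e ∈ H, (w e : ℝ) * (1 - 3 * τ) := by rw [mul_sum]; simp only [mul_comm]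
    _ ≤ ∑ e ∈ H, (w e : ℝ) * ∑ n ∈ range N,
      h * (Real.exp (r * (n * h)) * expect H (H.biUnion id) h x n (ind e)) :=
        sum_le_sum fun e he => mul_le_mul_of_nonneg_left (hedge e he) (by positivity)
    _ = D * ∑ i ∈ range N,
      h * (x i * ∑ e ∈ H, w e * expect H (H.biUnion id) h x i (ind e)) := by
        simp only [mul_sum]
        rw [sum_comm]
        refine sum_congr rfl fun i _ => sum_congr rfl fun e _ => ?_
        simp only [hxdef]
        field_simp
    _ ≤ _ := mul_le_mul_of_nonneg_left (by linarith) hD0.le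

end Nibble

/-! ### Covering `U` -/

/-- Theorem 3.2 (variant of Pippenger's theorem): for any `δ > 0` and `k`
there is `D₀` such that for all `D ≥ D₀`, any linear `k`-uniform hypergraph
with maximum degree at most `D` and a vertex set `U` all of whose vertices
have degree at least `(1 - δ)D` has a matching covering all but at most
`2δ|U|` vertices of `U`. -/
theorem nibble_matching (δ : ℝ) (hδ : 0 < δ) (k : ℕ) :
    ∃ D₀ : ℝ, ∀ D : ℝ, D₀ ≤ D →
    ∀ (V : Type) [DecidableEq V] (H : Finset (Finset V)) (U : Finset V),
      -- `k`-uniform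
      (∀ e ∈ H, e.card = k) →
      -- linear: two distinct edges share at most one vertex
      (∀ e ∈ H, ∀ e' ∈ H, e ≠ e' → (e ∩ e').card ≤ 1) →
      -- maximum degree at most `D`
      (∀ v : V, ((H.filter (fun e => v ∈ e)).card : ℝ) ≤ D) →
      -- every vertex of `U` has degree at least `(1 - δ) D`
      (∀ u ∈ U, (1 - δ) * D ≤ ((H.filter (fun e => u ∈ e)).card : ℝ)) →
      ∃ M ⊆ H, (∀ e ∈ M, ∀ e' ∈ M, e ≠ e' → Disjoint e e') ∧
        ((U.filter (fun u => ¬ ∃ e ∈ M, u ∈ e)).card : ℝ) ≤ 2 * δ * U.card := by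
  rcases le_or_gt 1 δ with h1 | h1
  · refine ⟨0, fun D _ V _ H U _ _ _ _ => ⟨∅, by simp, by simp, ?_⟩⟩
    simp only [Finset.notMem_empty, false_and, exists_false, not_false_eq_true,
      Finset.filter_true]
    nlinarith [(Nat.cast_nonneg U.card : (0 : ℝ) ≤ U.card)]
  -- For `k = 0` all degrees vanish, so `U` is empty.
  rcases k with _ | r
  · refine ⟨1, fun D hD V _ H U hk _ _ hU => ⟨∅, by simp, by simp, ?_⟩⟩
    have : U = ∅ := by
      rw [Finset.eq_empty_iff_forall_notMem]
      intro u hu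
      have h2 := hU u hu
      have h3 : H.filter (fun e => u ∈ e) = ∅ := by
        rw [Finset.filter_eq_empty_iff]
        intro e he hue
        have := Finset.card_eq_zero.1 (hk e he)
        simp [this] at hue
      rw [h3] at h2
      have : 0 < (1 - δ) * D := mul_pos (by linarith) (by linarith)
      simp at h2
      linarith
    simp [this]
  -- With `w e = #(e ∩ U)`, the weight of a matching is the number of vertices of `U` it covers, and
  -- the total weight is the degree sum over `U`, at least `(1 - δ) D #U`.
  obtain ⟨D₀, hD₀, hmain⟩ := Nibble.exists_large_weight (τ := δ / 3) (by positivity) r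
  refine ⟨D₀, fun D hD V _ H U hk hlin hdeg hU => ?_⟩
  obtain ⟨M, hMH, hM, hw⟩ := hmain D hD V H hk hlin hdeg fun e => (e ∩ U).card
  refine ⟨M, hMH, hM, ?_⟩
  have hD0 : 0 < D := by linarith
  have hsum : (1 - δ) * D * U.card ≤ ∑ e ∈ H, ((e ∩ U).card : ℝ) := by
    have h2 : ∑ e ∈ H, (e ∩ U).card = ∑ u ∈ U, (H.filter (fun e => u ∈ e)).card := by
      have := Finset.sum_card_bipartiteAbove_eq_sum_card_bipartiteBelow (s := H) (t := U)
        (fun e u => u ∈ e)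
      simpa [Finset.bipartiteAbove, Finset.bipartiteBelow, Finset.filter_mem_eq_inter,
        Finset.inter_comm] using this
    rw [← Nat.cast_sum, h2, Nat.cast_sum, mul_comm, ← nsmul_eq_mul]
    exact Finset.card_nsmul_le_sum _ _ _ hU
  have hcov : ∑ e ∈ M, (e ∩ U).card = (U.filter (fun u => ∃ e ∈ M, u ∈ e)).card := by
    rw [← Finset.card_biUnion]
    · congr 1
      ext u
      simp only [Finset.mem_biUnion, Finset.mem_inter, Finset.mem_filter]
      tauto
    · intro e he f hf hef
      exact (hM e he f hf hef).mono Finset.inter_subset_left Finset.inter_subset_left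
  have hsplit := Finset.card_filter_add_card_filter_not (s := U) (fun u => ∃ e ∈ M, u ∈ e)
  rw [← Nat.cast_sum (s := M), hcov] at hw
  have hsplit' : ((U.filter (fun u => ∃ e ∈ M, u ∈ e)).card : ℝ) +
      (U.filter (fun u => ¬ ∃ e ∈ M, u ∈ e)).card = U.card := by exact_mod_cast hsplit
  have h2 := mul_le_mul_of_nonneg_left hsum (show 0 ≤ 1 - δ by linarith)
  have h3 : D * ((1 - δ) ^ 2 * U.card) ≤
      D * (U.filter (fun u => ∃ e ∈ M, u ∈ e)).card := by
    rw [show 3 * (δ / 3) = δ by ring] at hw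
    linarith
  have h4 := le_of_mul_le_mul_left h3 hD0
  have h5 : 0 ≤ δ ^ 2 * (U.card : ℝ) := by positivity
  linarith
end

section
/- Let Q' be a partial n-queens configuration and let Λ ⊆ [n]×[n] be the set of squares not attacked by Q', i.e. squares sharing no line with any element of Q'. If there exists a line weighting w: 𝓛 → [0,1] which covers every square of Λ (meaning w(R_i)+w(C_j)+w(D⁺_{i+j−(n+1)})+w(D⁻_{i−j}) ≥ 1 for every (i,j)∈Λ) and whose value Σ_{L∈𝓛} w(L) is strictly less than n−|Q'|, then Q' cannot be completed to an n-queens configuration. -/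
/-- A total of nonnegative line weights `w` over a set of queens `S` is at most the total weight
of the lines in `T`, when the lines `f p` through the queens are distinct members of `T`. -/
theorem sum_comp_le_sum_of_injOn {S : Finset (ℤ × ℤ)} {T : Finset ℤ} {f : ℤ × ℤ → ℤ}
    {w : ℤ → ℝ} (hw : ∀ k ∈ T, 0 ≤ w k ∧ w k ≤ 1) (hf : ∀ p ∈ S, f p ∈ T)
    (hinj : ∀ p ∈ S, ∀ q ∈ S, p ≠ q → f p ≠ f q) :
    ∑ p ∈ S, w (f p) ≤ ∑ k ∈ T, w k := by
  rw [← Finset.sum_image (f := w) (g := f) (s := S)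
    (fun p hp q hq h => by_contra fun hne => hinj p hp q hq hne h)]
  exact Finset.sum_le_sum_of_subset_of_nonneg (Finset.image_subset_iff.2 hf)
    fun k hk _ => (hw k hk).1

/-- Proposition 4.1 (LP duality certificate): if some line weighting, given by
weights `wR` on rows, `wC` on columns, `wDp` on the diagonals `D⁺` and `wDm`
on the diagonals `D⁻`, covers every square not attacked by `Q'` and has total
value less than `n - |Q'|`, then `Q'` cannot be completed. -/
theorem dual_certificate (n : ℕ) (Q' : Finset (ℤ × ℤ))
    (hQ' : IsPartialQueens n Q')
    (Λ : Finset (ℤ × ℤ))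
    (hΛ : Λ = (Finset.Icc (1 : ℤ) n ×ˢ Finset.Icc (1 : ℤ) n).filter
      (fun p => ∀ q ∈ Q', p.1 ≠ q.1 ∧ p.2 ≠ q.2 ∧
        p.1 + p.2 ≠ q.1 + q.2 ∧ p.1 - p.2 ≠ q.1 - q.2))
    (wR wC wDp wDm : ℤ → ℝ)
    (hwR : ∀ i ∈ Finset.Icc (1 : ℤ) n, 0 ≤ wR i ∧ wR i ≤ 1)
    (hwC : ∀ i ∈ Finset.Icc (1 : ℤ) n, 0 ≤ wC i ∧ wC i ≤ 1)
    (hwDp : ∀ k ∈ Finset.Icc (-(n : ℤ) + 1) ((n : ℤ) - 1), 0 ≤ wDp k ∧ wDp k ≤ 1)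
    (hwDm : ∀ k ∈ Finset.Icc (-(n : ℤ) + 1) ((n : ℤ) - 1), 0 ≤ wDm k ∧ wDm k ≤ 1)
    -- the weighting covers every square of Λ
    (hcover : ∀ p ∈ Λ,
      1 ≤ wR p.1 + wC p.2 + wDp (p.1 + p.2 - ((n : ℤ) + 1)) + wDm (p.1 - p.2))
    -- the value of the weighting is less than n - |Q'|
    (hvalue : (∑ i ∈ Finset.Icc (1 : ℤ) n, (wR i + wC i)) +
        (∑ k ∈ Finset.Icc (-(n : ℤ) + 1) ((n : ℤ) - 1), (wDp k + wDm k)) <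
        (n : ℝ) - Q'.card) :
    ¬ ∃ Q : Finset (ℤ × ℤ), IsQueens n Q ∧ Q' ⊆ Q := by
  rintro ⟨Q, ⟨⟨hbox, hline⟩, hcard⟩, hsub⟩
  have mem : ∀ p ∈ Q \ Q', p ∈ Q := fun p hp => (Finset.mem_sdiff.1 hp).1
  have hSΛ : ∀ p ∈ Q \ Q', p ∈ Λ := by
    intro p hp
    rw [hΛ, Finset.mem_filter, Finset.mem_product]
    refine ⟨hbox p (mem p hp), fun q hq => hline p (mem p hp) q (hsub hq) ?_⟩
    rintro rfl
    exact (Finset.mem_sdiff.1 hp).2 hq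
  have bounds : ∀ p ∈ Q \ Q', (1 ≤ p.1 ∧ p.1 ≤ n) ∧ (1 ≤ p.2 ∧ p.2 ≤ n) := by
    intro p hp
    simpa only [Finset.mem_Icc] using hbox p (mem p hp)
  have line := fun p hp q hq => hline p (mem p hp) q (mem q hq)
  have hR := sum_comp_le_sum_of_injOn (S := Q \ Q') (f := fun p => p.1) hwR
    (fun p hp => (hbox p (mem p hp)).1) (fun p hp q hq h => (line p hp q hq h).1)
  have hC := sum_comp_le_sum_of_injOn (S := Q \ Q') (f := fun p => p.2) hwC
    (fun p hp => (hbox p (mem p hp)).2) (fun p hp q hq h => (line p hp q hq h).2.1)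
  have hP := sum_comp_le_sum_of_injOn (S := Q \ Q')
    (f := fun p => p.1 + p.2 - ((n : ℤ) + 1)) hwDp
    (fun p hp => by have := bounds p hp; rw [Finset.mem_Icc]; omega)
    (fun p hp q hq h => by have := (line p hp q hq h).2.2.1; omega)
  have hM := sum_comp_le_sum_of_injOn (S := Q \ Q') (f := fun p => p.1 - p.2) hwDm
    (fun p hp => by have := bounds p hp; rw [Finset.mem_Icc]; omega)
    (fun p hp q hq h => (line p hp q hq h).2.2.2)
  have hsum := Finset.sum_le_sum fun p hp => hcover p (hSΛ p hp)
  have hsize : ((Q \ Q').card : ℝ) = n - Q'.card := by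
    rw [Finset.cast_card_sdiff hsub, hcard]
  simp only [Finset.sum_add_distrib, Finset.sum_const, nsmul_eq_mul, mul_one] at hsum hvalue
  linarith
end

section
/- There is an absolute constant C such that for every n ≡ 1 (mod 6) there exists an n-queens configuration Q with Σ_{(i,j)∈Q} (|i+j−(n+1)| + |i−j|) ≤ 2n²/3 + Cn. In fact, the configuration placing a queen on (i,2i) for each i∈{1,…,(n−1)/2} and on (i,2i−n) for each i∈{(n+1)/2,…,n} has this property. -/
/-- The set `Q`, for `n = 6m + 1`, parametrised by natural numbers. -/
lemma queens_eq_image_range (m : ℕ) :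
    (Finset.Icc (1 : ℤ) ((((6 * m + 1 : ℕ) : ℤ) - 1) / 2)).image (fun i => (i, 2 * i)) ∪
      (Finset.Icc ((((6 * m + 1 : ℕ) : ℤ) + 1) / 2) ((6 * m + 1 : ℕ) : ℤ)).image
        (fun i => (i, 2 * i - ((6 * m + 1 : ℕ) : ℤ))) =
    (Finset.range (3 * m)).image (fun k : ℕ => ((k : ℤ) + 1, 2 * (k : ℤ) + 2)) ∪
      (Finset.range (3 * m + 1)).image
        (fun k : ℕ => (3 * (m : ℤ) + 1 + k, 2 * (k : ℤ) + 1)) := by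
  ext ⟨a, b⟩
  simp only [Finset.mem_union, Finset.mem_image, Finset.mem_Icc, Finset.mem_range, Prod.mk.injEq]
  constructor
  · rintro (⟨i, hi, h1, h2⟩ | ⟨i, hi, h1, h2⟩)
    · exact Or.inl ⟨(i - 1).toNat, by omega, by omega, by omega⟩
    · exact Or.inr ⟨(i - (3 * m + 1)).toNat, by omega, by omega, by omega⟩
  · rintro (⟨k, hk, h1, h2⟩ | ⟨k, hk, h1, h2⟩)
    · exact Or.inl ⟨k + 1, by omega, by omega, by omega⟩
    · exact Or.inr ⟨3 * m + 1 + k, by omega, by omega, by omega⟩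

lemma two_mul_sum_range (b : ℕ) :
    2 * ∑ k ∈ Finset.range b, (k : ℤ) = (b : ℤ) * (b - 1) := by
  induction b with
  | zero => simp
  | succ b ih =>
    rw [Finset.sum_range_succ, mul_add, ih]
    push_cast
    ring

lemma two_mul_sum_abs_sub (a b : ℕ) :
    2 * ∑ k ∈ Finset.range (a + b), |(k : ℤ) - a| = (a : ℤ) * (a + 1) + b * (b - 1) := by
  have h1 : ∑ k ∈ Finset.range a, |(k : ℤ) - a| = ∑ k ∈ Finset.range a, ((a : ℤ) - k) := by
    refine Finset.sum_congr rfl fun k hk => ?_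
    rw [Finset.mem_range] at hk
    rw [abs_of_nonpos (by omega)]
    ring
  rw [Finset.sum_range_add, h1, Finset.sum_sub_distrib]
  have h2 := two_mul_sum_range a
  have h3 := two_mul_sum_range b
  simp only [Nat.cast_add, add_sub_cancel_left, Nat.abs_cast, Finset.sum_const, Finset.card_range,
    nsmul_eq_mul]
  linarith

/-- Proposition 4.2: there is an absolute constant `C` such that for every
`n ≡ 1 (mod 6)`, the configuration placing a queen on `(i, 2i)` for
`1 ≤ i ≤ (n-1)/2` and on `(i, 2i - n)` for `(n+1)/2 ≤ i ≤ n` is an `n`-queens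
configuration `Q` with `∑_{(i,j)∈Q} |i+j-(n+1)| + |i-j| ≤ 2n²/3 + Cn`. -/
theorem central_diagonal_configuration :
    ∃ C : ℝ, ∀ n : ℕ, n % 6 = 1 →
      ∀ Q : Finset (ℤ × ℤ),
        Q = (Finset.Icc (1 : ℤ) (((n : ℤ) - 1) / 2)).image (fun i => (i, 2 * i)) ∪
            (Finset.Icc (((n : ℤ) + 1) / 2) (n : ℤ)).image (fun i => (i, 2 * i - n)) →
        IsQueens n Q ∧
        ((∑ q ∈ Q, (|q.1 + q.2 - ((n : ℤ) + 1)| + |q.1 - q.2|) : ℤ) : ℝ) ≤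
          2 * (n : ℝ) ^ 2 / 3 + C * n := by
  refine ⟨1, fun n hn Q hQ => ?_⟩
  obtain ⟨m, rfl⟩ : ∃ m, n = 6 * m + 1 := ⟨n / 6, by omega⟩
  rw [queens_eq_image_range] at hQ
  have hdisj : Disjoint
      ((Finset.range (3 * m)).image (fun k : ℕ => ((k : ℤ) + 1, 2 * (k : ℤ) + 2)))
      ((Finset.range (3 * m + 1)).image
        (fun k : ℕ => (3 * (m : ℤ) + 1 + k, 2 * (k : ℤ) + 1))) := by
    rw [Finset.disjoint_left]
    rintro ⟨a, b⟩ h1 h2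
    simp only [Finset.mem_image, Finset.mem_range, Prod.mk.injEq] at h1 h2
    obtain ⟨k, hk, h3, h4⟩ := h1
    obtain ⟨l, hl, h5, h6⟩ := h2
    omega
  have hinj1 : Function.Injective (fun k : ℕ => ((k : ℤ) + 1, 2 * (k : ℤ) + 2)) := by
    intro k l h
    simp only [Prod.mk.injEq] at h
    omega
  have hinj2 : Function.Injective
      (fun k : ℕ => (3 * (m : ℤ) + 1 + k, 2 * (k : ℤ) + 1)) := by
    intro k l h
    simp only [Prod.mk.injEq] at h
    omega
  have hmem : ∀ q ∈ Q, (∃ k < 3 * m, (k : ℤ) + 1 = q.1 ∧ 2 * (k : ℤ) + 2 = q.2) ∨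
      ∃ k < 3 * m + 1, 3 * (m : ℤ) + 1 + k = q.1 ∧ 2 * (k : ℤ) + 1 = q.2 := by
    rintro ⟨a, b⟩ hq
    simpa only [hQ, Finset.mem_union, Finset.mem_image, Finset.mem_range, Prod.mk.injEq] using hq
  refine ⟨⟨⟨fun q hq => ?_, fun q hq q' hq' hne => ?_⟩, ?_⟩, ?_⟩
  · simp only [Finset.mem_Icc]
    rcases hmem q hq with ⟨k, hk, h1, h2⟩ | ⟨k, hk, h1, h2⟩ <;> omega
  · rw [Ne, Prod.ext_iff] at hne
    rcases hmem q hq with ⟨k, hk, h1, h2⟩ | ⟨k, hk, h1, h2⟩ <;>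
    rcases hmem q' hq' with ⟨l, hl, h3, h4⟩ | ⟨l, hl, h3, h4⟩ <;>
    refine ⟨?_, ?_, ?_, ?_⟩ <;> omega
  · rw [hQ, Finset.card_union_of_disjoint hdisj, Finset.card_image_of_injective _ hinj1,
      Finset.card_image_of_injective _ hinj2, Finset.card_range, Finset.card_range]
    omega
  · have hsum : ∑ q ∈ Q, (|q.1 + q.2 - (((6 * m + 1 : ℕ) : ℤ) + 1)| + |q.1 - q.2|) ≤
        24 * (m : ℤ) ^ 2 + 12 * m := by
      rw [hQ, Finset.sum_union hdisj, Finset.sum_image hinj1.injOn, Finset.sum_image hinj2.injOn]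
      have e1 : ∑ k ∈ Finset.range (3 * m),
            (|(k : ℤ) + 1 + (2 * (k : ℤ) + 2) - (((6 * m + 1 : ℕ) : ℤ) + 1)| +
              |(k : ℤ) + 1 - (2 * (k : ℤ) + 2)|) ≤
          ∑ k ∈ Finset.range (3 * m), (3 * |(k : ℤ) - (2 * m : ℕ)| + (k : ℤ) + 2) := by
        refine Finset.sum_le_sum fun k hk => ?_
        simp only [abs_eq_max_neg]
        omega
      have e2 : ∑ k ∈ Finset.range (3 * m + 1),
            (|3 * (m : ℤ) + 1 + k + (2 * (k : ℤ) + 1) - (((6 * m + 1 : ℕ) : ℤ) + 1)| +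
              |3 * (m : ℤ) + 1 + k - (2 * (k : ℤ) + 1)|) =
          ∑ k ∈ Finset.range (3 * m + 1), (3 * |(k : ℤ) - m| + (3 * m - (k : ℤ))) := by
        refine Finset.sum_congr rfl fun k hk => ?_
        rw [Finset.mem_range] at hk
        simp only [abs_eq_max_neg]
        omega
      have s1 := two_mul_sum_abs_sub (2 * m) m
      have s2 := two_mul_sum_abs_sub m (2 * m + 1)
      have t1 := two_mul_sum_range (3 * m)
      have t2 := two_mul_sum_range (3 * m + 1)
      rw [show 2 * m + m = 3 * m by ring] at s1
      rw [show m + (2 * m + 1) = 3 * m + 1 by ring] at s2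
      rw [e2]
      refine (add_le_add_left e1 _).trans ?_
      simp only [Finset.sum_add_distrib, Finset.sum_sub_distrib, ← Finset.mul_sum,
        Finset.sum_const, Finset.card_range, nsmul_eq_mul]
      push_cast at s1 s2 t1 t2 ⊢
      linarith
    have hreal : ((∑ q ∈ Q, (|q.1 + q.2 - (((6 * m + 1 : ℕ) : ℤ) + 1)| + |q.1 - q.2|) : ℤ) : ℝ) ≤
        24 * (m : ℝ) ^ 2 + 12 * m := by exact_mod_cast hsum
    refine hreal.trans ?_
    push_cast
    have : (0 : ℝ) ≤ m := m.cast_nonneg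
    linarith
end

section
/- There exists n₀ such that for all n ≥ n₀, every partial n-queens configuration Q' ⊆ [n]×[n] can be embedded into an N-queens configuration for some N ≤ 60n: there exist N ≤ 60n, an N-queens configuration Q ⊆ [N]×[N], and integers i₀, j₀ such that (i+i₀, j+j₀) ∈ Q for every (i,j) ∈ Q'. -/
namespace QueensEmbedding

/-- The 12-queens configuration (with coordinates `0, …, 11`) describing the block pattern. -/
def A : Finset (ℤ × ℤ) :=
  {(0, 1), (1, 4), (2, 9), (3, 3), (4, 0), (5, 10), (6, 8), (7, 11), (8, 5), (9, 7), (10, 2),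
    (11, 6)}

/-- The two squares lie on no common line. -/
def Free (z w : ℤ × ℤ) : Prop :=
  z.1 ≠ w.1 ∧ z.2 ≠ w.2 ∧ z.1 + z.2 ≠ w.1 + w.2 ∧ z.1 - z.2 ≠ w.1 - w.2

lemma Free.symm {z w : ℤ × ℤ} (h : Free z w) : Free w z :=
  ⟨h.1.symm, h.2.1.symm, h.2.2.1.symm, h.2.2.2.symm⟩

/-- For `0 ≤ x < 6 t + 1`, the residue of `2 x` modulo `6 t + 1`. -/
def dbl (t x : ℤ) : ℤ := if x ≤ 3 * t then 2 * x else 2 * x - (6 * t + 1)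

lemma dbl_spec (t x : ℤ) :
    (x ≤ 3 * t ∧ dbl t x = 2 * x) ∨ (3 * t < x ∧ dbl t x = 2 * x - (6 * t + 1)) := by
  unfold dbl
  split_ifs <;> omega

/-- The base queen with parameter `0 ≤ x < 6 t + 1` in the block `p ∈ A`, in coordinates starting
from `1`; block row `0` holds the transposed pattern. -/
def base (t : ℤ) (p : ℤ × ℤ) (x : ℤ) : ℤ × ℤ :=
  if p.1 = 0 then (p.1 * (6 * t + 1) + dbl t x + 1, p.2 * (6 * t + 1) + x + 1)
  else (p.1 * (6 * t + 1) + x + 1, p.2 * (6 * t + 1) + dbl t x + 1)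

/-- The translation placing `Q'` into the corner of block `(2, 1)`. -/
def phi (t : ℤ) (q : ℤ × ℤ) : ℤ × ℤ := (q.1 + 2 * (6 * t + 1), q.2 + 1 * (6 * t + 1))

/-- The reflected and doubled copy in block `(0, 9)`. -/
def psi (t : ℤ) (q : ℤ × ℤ) : ℤ × ℤ := (2 * (q.2 - 1) + 1, 9 * (6 * t + 1) + 2 * (q.1 - 1) + 1)

lemma A_free : ∀ p ∈ A, ∀ q ∈ A, p ≠ q → p.1 ≠ q.1 ∧ p.2 ≠ q.2 ∧ p.1 + p.2 ≠ q.1 + q.2 ∧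
    p.1 - p.2 ≠ q.1 - q.2 := by decide

/-- The diagonals through block `(0, 9)`, or through the corner of block `(2, 1)`, carry no base
queen. -/
lemma A_avoid : ∀ p ∈ A, p.1 + p.2 ≠ 3 ∧ p.1 + p.2 ≠ 2 ∧ p.1 - p.2 ≠ 1 ∧
    p.1 + p.2 ≠ 8 ∧ p.1 + p.2 ≠ 9 ∧ p.1 + p.2 ≠ 10 ∧
    p.1 - p.2 ≠ -8 ∧ p.1 - p.2 ≠ -9 ∧ p.1 - p.2 ≠ -10 := by decide

/-- Uniqueness of division with remainder, up to an error `k - 1` in the quotient when the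
remainders are known only to differ by less than `k m`. -/
lemma quot_close {m D D' u u' k : ℤ} (hm : 0 < m) (h : D * m + u = D' * m + u')
    (h1 : u - u' < k * m) (h2 : u' - u < k * m) : D - D' < k ∧ D' - D < k := by
  constructor <;> by_contra! hc <;> nlinarith [mul_le_mul_of_nonneg_right hc hm.le]

lemma quot_eq {m D D' u u' : ℤ} (hm : 0 < m) (h : D * m + u = D' * m + u')
    (h1 : u - u' < m) (h2 : u' - u < m) : D = D' := by
  have := quot_close (k := 1) hm h (by linarith) (by linarith)
  omega

section
variable {t : ℤ}

/-- Base queens in blocks with different sums have different sums themselves,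
because `3 x` determines `x` modulo `6 t + 1`. -/
lemma sum_inj (ht : 0 ≤ t) {D D' x y : ℤ} (hx : 0 ≤ x ∧ x < 6 * t + 1)
    (hy : 0 ≤ y ∧ y < 6 * t + 1)
    (h : D * (6 * t + 1) + (x + dbl t x) = D' * (6 * t + 1) + (y + dbl t y)) : D = D' := by
  have hx' := dbl_spec t x
  have hy' := dbl_spec t y
  have hc := quot_close (k := 2) (by omega) h (by omega) (by omega)
  have : D = D' ∨ D = D' + 1 ∨ D' = D + 1 := by omega
  rcases this with e | e | e
  · exact e
  · subst e
    have : (D' + 1) * (6 * t + 1) = D' * (6 * t + 1) + (6 * t + 1) := by ring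
    omega
  · subst e
    have : (D + 1) * (6 * t + 1) = D * (6 * t + 1) + (6 * t + 1) := by ring
    omega

lemma base_cases (t : ℤ) (p : ℤ × ℤ) (x : ℤ) :
    (p.1 = 0 ∧ base t p x = (p.1 * (6 * t + 1) + dbl t x + 1, p.2 * (6 * t + 1) + x + 1)) ∨
    (p.1 ≠ 0 ∧ base t p x = (p.1 * (6 * t + 1) + x + 1, p.2 * (6 * t + 1) + dbl t x + 1)) := by
  unfold base
  split_ifs with h <;> simp [h]

/-- Coordinates of a base queen: the block decomposition of its row, column, sum and difference. -/
lemma base_coords (p : ℤ × ℤ) {x : ℤ} (hx : 0 ≤ x ∧ x < 6 * t + 1) :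
    ∃ u v : ℤ, (base t p x).1 = p.1 * (6 * t + 1) + u + 1 ∧
      (base t p x).2 = p.2 * (6 * t + 1) + v + 1 ∧
      (base t p x).1 + (base t p x).2 = (p.1 + p.2) * (6 * t + 1) + (x + dbl t x) + 2 ∧
      (base t p x).1 - (base t p x).2 = (p.1 - p.2) * (6 * t + 1) + (u - v) ∧
      u + v = x + dbl t x ∧
      0 ≤ u ∧ u < 6 * t + 1 ∧ 0 ≤ v ∧ v < 6 * t + 1 ∧
      -(6 * t + 1) < 2 * (u - v) ∧ 2 * (u - v) < 6 * t + 1 ∧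
      ((p.1 = 0 ∧ u = dbl t x ∧ v = x) ∨ (p.1 ≠ 0 ∧ u = x ∧ v = dbl t x)) := by
  have hd := dbl_spec t x
  rcases base_cases t p x with ⟨h0, h⟩ | ⟨h0, h⟩
  · refine ⟨dbl t x, x, ?_⟩
    rw [h]
    refine ⟨by ring, by ring, by ring, by ring, ?_⟩
    omega
  · refine ⟨x, dbl t x, ?_⟩
    rw [h]
    refine ⟨by ring, by ring, by ring, by ring, ?_⟩
    omega

lemma base_base (ht : 0 ≤ t) {p q : ℤ × ℤ} (hp : p ∈ A) (hq : q ∈ A) {x y : ℤ}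
    (hx : 0 ≤ x ∧ x < 6 * t + 1) (hy : 0 ≤ y ∧ y < 6 * t + 1) (hne : p ≠ q ∨ x ≠ y) :
    Free (base t p x) (base t q y) := by
  have hm : 0 < 6 * t + 1 := by omega
  obtain ⟨u, v, e1, e2, e3, e4, e5, b1, b2, b3, b4, b5, b6, hc⟩ := base_coords p hx
  obtain ⟨u', v', f1, f2, f3, f4, f5, c1, c2, c3, c4, c5, c6, hc'⟩ := base_coords q hy
  have hdx := dbl_spec t x
  have hdy := dbl_spec t y
  by_cases hpq : p = q
  · subst hpq
    have hxy : x ≠ y := by tauto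
    have hne : u ≠ u' ∧ v ≠ v' ∧ x + dbl t x ≠ y + dbl t y ∧ u - v ≠ u' - v' := by
      clear e1 e2 e3 e4 f1 f2 f3 f4
      rcases hc with ⟨h0, rfl, rfl⟩ | ⟨h0, rfl, rfl⟩ <;>
      rcases hc' with ⟨h0', rfl, rfl⟩ | ⟨h0', rfl, rfl⟩ <;>
      first
        | exact absurd h0 h0'
        | exact absurd h0' h0
        | (rcases hdx with ⟨hx1, hx2⟩ | ⟨hx1, hx2⟩ <;> rcases hdy with ⟨hy1, hy2⟩ | ⟨hy1, hy2⟩ <;>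
            refine ⟨?_, ?_, ?_, ?_⟩ <;> omega)
    clear hc hc' hdx hdy
    obtain ⟨g1, g2, g3, g4⟩ := hne
    refine ⟨fun h => g1 ?_, fun h => g2 ?_, fun h => g3 ?_, fun h => g4 ?_⟩ <;> linarith
  · clear hc hc' hdx hdy
    obtain ⟨n1, n2, n3, n4⟩ := A_free p hp q hq hpq
    refine ⟨fun h => n1 ?_, fun h => n2 ?_, fun h => n3 ?_, fun h => n4 ?_⟩
    · exact quot_eq (u := u) (u' := u') hm (by omega) (by omega) (by omega)
    · exact quot_eq (u := v) (u' := v') hm (by omega) (by omega) (by omega)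
    · exact sum_inj ht hx hy (by omega)
    · exact quot_eq (u := u - v) (u' := u' - v') hm (by omega) (by omega) (by omega)

lemma base_phi (ht : 0 ≤ t) {n : ℤ} (hn : n ≤ 3 * t) {p q : ℤ × ℤ} (hp : p ∈ A) {x : ℤ}
    (hx : 0 ≤ x ∧ x < 6 * t + 1) (hq : (1 ≤ q.1 ∧ q.1 ≤ n) ∧ 1 ≤ q.2 ∧ q.2 ≤ n)
    (h1 : ¬ (p = (2, 9) ∧ q.1 = x + 1)) (h2 : ¬ (p = (0, 1) ∧ q.2 = x + 1)) :
    Free (base t p x) (phi t q) := by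
  have hm : 0 < 6 * t + 1 := by omega
  obtain ⟨u, v, e1, e2, e3, e4, e5, b1, b2, b3, b4, b5, b6, hc⟩ := base_coords p hx
  have hav := A_avoid p hp
  refine ⟨fun h => ?_, fun h => ?_, fun h => ?_, fun h => ?_⟩ <;> simp only [phi] at h
  · have e : p.1 = 2 := quot_eq (u := u) (u' := q.1 - 1) hm (by omega) (by omega) (by omega)
    refine h1 ⟨?_, by rw [e] at e1; omega⟩
    by_contra hne
    exact (A_free p hp (2, 9) (by decide) hne).1 e
  · have e : p.2 = 1 := quot_eq (u := v) (u' := q.2 - 1) hm (by omega) (by omega) (by omega)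
    have : p = (0, 1) := by
      by_contra hne
      exact (A_free p hp (0, 1) (by decide) hne).2.1 e
    refine h2 ⟨this, ?_⟩
    have h0 : p.1 = 0 := by rw [this]
    rw [e] at e2
    omega
  · have := quot_close (k := 2) (D := p.1 + p.2) (D' := 3) (u := x + dbl t x)
      (u' := q.1 + q.2 - 2) hm (by omega) (by omega) (by omega)
    -- Quotient `4` is excluded because the corner meets only sums in the first half of its block.
    have h4 : p.1 + p.2 = 4 := by omega
    rw [h4] at e3
    omega
  · have e : p.1 - p.2 = 1 :=
      quot_eq (u := u - v) (u' := q.1 - q.2) hm (by omega) (by omega) (by omega)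
    omega

lemma base_psi (ht : 0 ≤ t) {n : ℤ} (hn : n ≤ 3 * t) {p q : ℤ × ℤ} (hp : p ∈ A) {x : ℤ}
    (hx : 0 ≤ x ∧ x < 6 * t + 1) (hq : (1 ≤ q.1 ∧ q.1 ≤ n) ∧ 1 ≤ q.2 ∧ q.2 ≤ n)
    (h1 : ¬ (p = (2, 9) ∧ q.1 = x + 1)) (h2 : ¬ (p = (0, 1) ∧ q.2 = x + 1)) :
    Free (base t p x) (psi t q) := by
  have hm : 0 < 6 * t + 1 := by omega
  obtain ⟨u, v, e1, e2, e3, e4, e5, b1, b2, b3, b4, b5, b6, hc⟩ := base_coords p hx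
  have hdx := dbl_spec t x
  have hav := A_avoid p hp
  refine ⟨fun h => ?_, fun h => ?_, fun h => ?_, fun h => ?_⟩ <;> simp only [psi] at h
  · have e : p.1 = 0 := quot_eq (u := u) (u' := 2 * (q.2 - 1)) hm (by omega) (by omega) (by omega)
    refine h2 ⟨?_, by rw [e] at e1; omega⟩
    by_contra hne
    exact (A_free p hp (0, 1) (by decide) hne).1 e
  · have e : p.2 = 9 := quot_eq (u := v) (u' := 2 * (q.1 - 1)) hm (by omega) (by omega) (by omega)
    have : p = (2, 9) := by
      by_contra hne
      exact (A_free p hp (2, 9) (by decide) hne).2.1 e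
    refine h1 ⟨this, ?_⟩
    have h0 : p.1 = 2 := by rw [this]
    rw [e] at e2
    omega
  · have := quot_close (k := 2) (D := p.1 + p.2) (D' := 9) (u := x + dbl t x)
      (u' := 2 * (q.2 - 1) + 2 * (q.1 - 1)) hm (by omega) (by omega) (by omega)
    omega
  · have := quot_close (k := 2) (D := p.1 - p.2) (D' := -9) (u := u - v)
      (u' := 2 * (q.2 - 1) - 2 * (q.1 - 1)) hm (by omega) (by omega) (by omega)
    omega

lemma phi_psi {n : ℤ} (hn : n ≤ 3 * t) {p q : ℤ × ℤ}
    (hp : (1 ≤ p.1 ∧ p.1 ≤ n) ∧ 1 ≤ p.2 ∧ p.2 ≤ n)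
    (hq : (1 ≤ q.1 ∧ q.1 ≤ n) ∧ 1 ≤ q.2 ∧ q.2 ≤ n) : Free (phi t p) (psi t q) := by
  refine ⟨?_, ?_, ?_, ?_⟩ <;> simp only [phi, psi] <;> omega

end

/-- The base queen is not one of those removed by the switches for `Q'`. -/
def Kept (Q' : Finset (ℤ × ℤ)) (p : ℤ × ℤ) (x : ℤ) : Prop :=
  ∀ q ∈ Q', ¬ (p = (2, 9) ∧ q.1 = x + 1) ∧ ¬ (p = (0, 1) ∧ q.2 = x + 1)

lemma kept_iff (Q' : Finset (ℤ × ℤ)) (p : ℤ × ℤ) (x : ℤ) : Kept Q' p x ↔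
    ¬ ∃ q ∈ Q', (p = (2, 9) ∧ q.1 = x + 1) ∨ (p = (0, 1) ∧ q.2 = x + 1) := by
  simp only [Kept, not_exists, not_and, not_or]

/-- Membership in the final configuration. -/
def Mem (t : ℤ) (Q' : Finset (ℤ × ℤ)) (z : ℤ × ℤ) : Prop :=
  (∃ p ∈ A, ∃ x : ℤ, (0 ≤ x ∧ x < 6 * t + 1) ∧ Kept Q' p x ∧ z = base t p x) ∨
  (∃ q ∈ Q', z = phi t q) ∨ (∃ q ∈ Q', z = psi t q)

lemma mem_free {t : ℤ} (ht : 0 ≤ t) {n : ℕ} (hn : (n : ℤ) ≤ 3 * t) {Q' : Finset (ℤ × ℤ)}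
    (hQ : IsPartialQueens n Q') {z w : ℤ × ℤ} (hz : Mem t Q' z) (hw : Mem t Q' w) (hne : z ≠ w) :
    Free z w := by
  have hb : ∀ q ∈ Q', (1 ≤ q.1 ∧ q.1 ≤ (n : ℤ)) ∧ 1 ≤ q.2 ∧ q.2 ≤ (n : ℤ) := by
    intro q hq
    simpa only [Finset.mem_Icc] using hQ.1 q hq
  rcases hz with ⟨p, hp, x, hx, kx, rfl⟩ | ⟨q, hq, rfl⟩ | ⟨q, hq, rfl⟩ <;>
  rcases hw with ⟨p', hp', x', hx', kx', rfl⟩ | ⟨q', hq', rfl⟩ | ⟨q', hq', rfl⟩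
  · refine base_base ht hp hp' hx hx' ?_
    by_contra! hc
    exact hne (by rw [hc.1, hc.2])
  · exact base_phi ht hn hp hx (hb _ hq') (kx _ hq').1 (kx _ hq').2
  · exact base_psi ht hn hp hx (hb _ hq') (kx _ hq').1 (kx _ hq').2
  · exact (base_phi ht hn hp' hx' (hb _ hq) (kx' _ hq).1 (kx' _ hq).2).symm
  · have hne' : q ≠ q' := fun h => hne (by rw [h])
    have := hQ.2 q hq q' hq' hne'
    refine ⟨?_, ?_, ?_, ?_⟩ <;> simp only [phi] <;> omega
  · exact phi_psi hn (hb _ hq) (hb _ hq')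
  · exact (base_psi ht hn hp' hx' (hb _ hq) (kx' _ hq).1 (kx' _ hq).2).symm
  · exact (phi_psi hn (hb _ hq') (hb _ hq)).symm
  · have hne' : q ≠ q' := fun h => hne (by rw [h])
    have := hQ.2 q hq q' hq' hne'
    refine ⟨?_, ?_, ?_, ?_⟩ <;> simp only [psi] <;> omega

lemma A_rows : ∀ a ∈ Finset.Icc (0 : ℤ) 11, ∃ p ∈ A, p.1 = a := by decide

lemma A_bound : ∀ p ∈ A, 0 ≤ p.1 ∧ p.1 ≤ 11 ∧ 0 ≤ p.2 ∧ p.2 ≤ 11 := by decide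

lemma mem_bound {t : ℤ} (ht : 0 ≤ t) {n : ℕ} (hn : (n : ℤ) ≤ 3 * t) {Q' : Finset (ℤ × ℤ)}
    (hQ : IsPartialQueens n Q') {z : ℤ × ℤ} (hz : Mem t Q' z) :
    (1 ≤ z.1 ∧ z.1 ≤ 12 * (6 * t + 1)) ∧ 1 ≤ z.2 ∧ z.2 ≤ 12 * (6 * t + 1) := by
  have hb : ∀ q ∈ Q', (1 ≤ q.1 ∧ q.1 ≤ (n : ℤ)) ∧ 1 ≤ q.2 ∧ q.2 ≤ (n : ℤ) := by
    intro q hq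
    simpa only [Finset.mem_Icc] using hQ.1 q hq
  rcases hz with ⟨p, hp, x, hx, kx, rfl⟩ | ⟨q, hq, rfl⟩ | ⟨q, hq, rfl⟩
  · obtain ⟨u, v, e1, e2, e3, e4, e5, b1, b2, b3, b4, b5, b6, hc⟩ := base_coords p hx
    obtain ⟨g1, g2, g3, g4⟩ := A_bound p hp
    rw [e1, e2]
    refine ⟨⟨?_, ?_⟩, ?_, ?_⟩ <;> nlinarith
  · have := hb q hq
    simp only [phi]
    omega
  · have := hb q hq
    simp only [psi]
    omega

/-- The switches keep every row occupied. -/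
lemma row_covered {t : ℤ} (ht : 0 ≤ t) {n : ℕ} (hn : (n : ℤ) ≤ 3 * t) {Q' : Finset (ℤ × ℤ)}
    (hQ : IsPartialQueens n Q') {r : ℤ} (hr : 1 ≤ r) (hr' : r ≤ 12 * (6 * t + 1)) :
    ∃ z, Mem t Q' z ∧ z.1 = r := by
  have hm : 0 < 6 * t + 1 := by omega
  obtain ⟨a, ρ, h0, h1, e⟩ : ∃ a ρ : ℤ, 0 ≤ ρ ∧ ρ < 6 * t + 1 ∧ r = a * (6 * t + 1) + ρ + 1 := by
    refine ⟨(r - 1) / (6 * t + 1), (r - 1) % (6 * t + 1), Int.emod_nonneg _ hm.ne',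
      Int.emod_lt_of_pos _ hm, ?_⟩
    have := Int.mul_ediv_add_emod (r - 1) (6 * t + 1)
    linarith
  have ha : a ∈ Finset.Icc (0 : ℤ) 11 := by
    rw [Finset.mem_Icc]
    constructor
    · by_contra! h
      nlinarith
    · by_contra! h
      nlinarith
  obtain ⟨p, hp, rfl⟩ := A_rows a ha
  by_cases hp0 : p.1 = 0
  · obtain ⟨x, hx, hd⟩ : ∃ x : ℤ, (0 ≤ x ∧ x < 6 * t + 1) ∧ dbl t x = ρ := by
      rcases Int.even_or_odd' ρ with ⟨k, hk | hk⟩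
      · refine ⟨k, by omega, ?_⟩
        have := dbl_spec t k
        omega
      · refine ⟨k + 3 * t + 1, by omega, ?_⟩
        have := dbl_spec t (k + 3 * t + 1)
        omega
    by_cases hk : Kept Q' p x
    · refine ⟨base t p x, Or.inl ⟨p, hp, x, hx, hk, rfl⟩, ?_⟩
      simp [base, hp0, hd, e]
    · rw [kept_iff, not_not] at hk
      obtain ⟨q, hq, ⟨rfl, -⟩ | ⟨rfl, hqx⟩⟩ := hk
      · simp at hp0
      · refine ⟨psi t q, Or.inr (Or.inr ⟨q, hq, rfl⟩), ?_⟩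
        have hb := (hQ.1 q hq).2
        rw [Finset.mem_Icc] at hb
        have := dbl_spec t x
        simp only [psi]
        omega
  · by_cases hk : Kept Q' p ρ
    · refine ⟨base t p ρ, Or.inl ⟨p, hp, ρ, ⟨h0, h1⟩, hk, rfl⟩, ?_⟩
      simp [base, hp0, e]
    · rw [kept_iff, not_not] at hk
      obtain ⟨q, hq, ⟨rfl, hqx⟩ | ⟨rfl, -⟩⟩ := hk
      · refine ⟨phi t q, Or.inr (Or.inl ⟨q, hq, rfl⟩), ?_⟩
        simp only [phi]
        omega
      · simp at hp0

end QueensEmbedding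

/-- For large `n`, every partial `n`-queens configuration can be embedded into
an `N`-queens configuration for some `N ≤ 60n`. -/
theorem queens_embedding :
    ∃ n₀ : ℕ, ∀ n : ℕ, n₀ ≤ n → ∀ Q' : Finset (ℤ × ℤ),
      IsPartialQueens n Q' →
      ∃ N : ℕ, N ≤ 60 * n ∧ ∃ Q : Finset (ℤ × ℤ), IsQueens N Q ∧
        ∃ i₀ j₀ : ℤ, ∀ p ∈ Q', (p.1 + i₀, p.2 + j₀) ∈ Q := by
  classical
  refine ⟨2, fun n hn Q' hQ => ?_⟩
  set t : ℕ := (n + 2) / 3 with ht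
  -- With `n ≤ 3 t` the doubled coordinates `2 (i - 1)` fit in a block.
  have hnt : (n : ℤ) ≤ 3 * (t : ℤ) := by omega
  have ht0 : (0 : ℤ) ≤ t := by omega
  set N : ℕ := 12 * (6 * t + 1) with hN
  have hNt : (N : ℤ) = 12 * (6 * (t : ℤ) + 1) := by push_cast [hN]; ring
  set Q : Finset (ℤ × ℤ) := (Finset.Icc (1 : ℤ) N ×ˢ Finset.Icc (1 : ℤ) N).filter
    (QueensEmbedding.Mem t Q') with hQdef
  have hmem : ∀ z, z ∈ Q ↔ QueensEmbedding.Mem t Q' z := by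
    intro z
    rw [hQdef, Finset.mem_filter, Finset.mem_product, Finset.mem_Icc, Finset.mem_Icc, hNt]
    exact ⟨fun h => h.2, fun h => ⟨QueensEmbedding.mem_bound ht0 hnt hQ h, h⟩⟩
  have hfree : ∀ z ∈ Q, ∀ w ∈ Q, z ≠ w → QueensEmbedding.Free z w := fun z hz w hw =>
    QueensEmbedding.mem_free ht0 hnt hQ ((hmem z).1 hz) ((hmem w).1 hw)
  have hcard : Q.card = N := by
    have himg : Q.image Prod.fst = Finset.Icc (1 : ℤ) N := by
      ext r
      rw [Finset.mem_image, Finset.mem_Icc]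
      constructor
      · rintro ⟨z, hz, rfl⟩
        rw [hNt]
        exact (QueensEmbedding.mem_bound ht0 hnt hQ ((hmem z).1 hz)).1
      · rintro ⟨h1, h2⟩
        rw [hNt] at h2
        obtain ⟨z, hz, hzr⟩ := QueensEmbedding.row_covered ht0 hnt hQ h1 h2
        exact ⟨z, (hmem z).2 hz, hzr⟩
    have hinj : Set.InjOn Prod.fst (Q : Set (ℤ × ℤ)) := by
      intro z hz w hw h
      by_contra hne
      exact (hfree z hz w hw hne).1 h
    rw [← Finset.card_image_of_injOn hinj, himg]
    simp
  refine ⟨N, by omega, Q, ⟨⟨fun z hz => ?_, hfree⟩, hcard⟩, 2 * (6 * (t : ℤ) + 1),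
    1 * (6 * (t : ℤ) + 1), fun p hp => (hmem _).2 (Or.inr (Or.inl ⟨p, hp, rfl⟩))⟩
  rw [hQdef, Finset.mem_filter, Finset.mem_product] at hz
  exact hz.1
end
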